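/- (Long term stability of actions near a fully resonant torus) There are constants γ₀ > 0 and r₀ ∈ (0,1) with the following property: for every γ ≥ γ₀ there are positive constants ε₀, c₂, c₃ such that if 0 < ε ≤ ε₀, n is a natural number with n < ε^{−d/(2(d+1))}, and I* ∈ B_R satisfies n·h₀'(I*) ∈ ℤ^d, then every trajectory (I_k,φ_k) = F_ε^k(I₀,φ₀) with |I₀ − I*| < r₀ ρ_n and φ₀ ∈ ℝ^d satisfies |I_k − I*| < ρ_n for all integers 0 ≤ k ≤ c₂·exp(c₃ ε^{−1/(2(d+1))}), where ρ_n = γ n^{−1} ε^{1/(2(d+1))}. -/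

import Mathlib

/-- Real phase space `ℝ^d × ℝ^d` (actions–angles, sup norm), a lift of `ℝ^d × 𝕋^d`. -/
abbrev RPhase (d : ℕ) := (Fin d → ℝ) × (Fin d → ℝ)

/-- Complex phase space `ℂ^d × ℂ^d` with the sup norm. -/
abbrev CPhase (d : ℕ) := (Fin d → ℂ) × (Fin d → ℂ)

/-- Complexification of a real vector. -/
def cx (d : ℕ) (v : Fin d → ℝ) : Fin d → ℂ := fun i => (v i : ℂ)

section NekPart1

open Metric Set

theorem nek_cauchy_dist {E F : Type*} [NormedAddCommGroup E] [NormedSpace ℂ E]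
    [NormedAddCommGroup F] [NormedSpace ℂ F] {f : E → F} {x y : E} {e M : ℝ}
    (hd : DifferentiableOn ℂ f (ball x e)) (hM : ∀ z ∈ ball x e, ‖f z‖ ≤ M)
    (hy : y ∈ ball x e) : ‖f y - f x‖ ≤ 2 * M / e * ‖y - x‖ := by
  have he : 0 < e := nonempty_ball.mp ⟨_, hy⟩
  have h := Complex.dist_le_div_mul_dist_of_mapsTo_ball (R₂ := 2 * M) hd (by
    intro z hz
    rw [mem_closedBall, dist_eq_norm]
    calc ‖f z - f x‖ ≤ ‖f z‖ + ‖f x‖ := norm_sub_le _ _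
      _ ≤ M + M := add_le_add (hM z hz) (hM x (mem_ball_self he))
      _ = 2 * M := by ring) hy
  simpa [dist_eq_norm] using h

theorem nek_cauchy_fderiv {E F : Type*} [NormedAddCommGroup E] [NormedSpace ℂ E]
    [NormedAddCommGroup F] [NormedSpace ℂ F] {f : E → F} {x : E} {e M : ℝ} (he : 0 < e)
    (hd : DifferentiableOn ℂ f (ball x e)) (hM : ∀ z ∈ ball x e, ‖f z‖ ≤ M) :
    ‖fderiv ℂ f x‖ ≤ 2 * M / e := by
  refine Complex.norm_fderiv_le_div_of_mapsTo_ball (R₂ := 2 * M) hd ?_ he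
  intro z hz
  rw [mem_closedBall, dist_eq_norm]
  calc ‖f z - f x‖ ≤ ‖f z‖ + ‖f x‖ := norm_sub_le _ _
    _ ≤ M + M := add_le_add (hM z hz) (hM x (mem_ball_self he))
    _ = 2 * M := by ring

/-- iterated differences along the map `G` -/
def nekD {V : Type*} [AddCommGroup V] (G : V → V) : ℕ → V → V
  | 0 => fun x => x
  | k + 1 => fun x => nekD G k (G x) - nekD G k x

/-- binomial polynomials -/
noncomputable def nekB (k : ℕ) (t : ℂ) : ℂ := ∏ i ∈ Finset.range k, ((t - i) / (i + 1))

/-- Newton interpolation of the orbit -/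
noncomputable def nekW {V : Type*} [NormedAddCommGroup V] [NormedSpace ℂ V] (G : V → V)
    (m : ℕ) (v : V) (t : ℂ) : V :=
  ∑ k ∈ Finset.range (m + 1), nekB k t • nekD G k v

section
set_option linter.unusedSectionVars false
variable {V : Type*} [NormedAddCommGroup V] [NormedSpace ℂ V]

theorem nekD_iter (G : V → V) (v : V) (k i : ℕ) :
    (fwdDiff (1:ℕ))^[k] (fun j : ℕ => G^[j] v) i = nekD G k (G^[i] v) := by
  induction k generalizing i with
  | zero => rfl
  | succ k ih =>
    rw [Function.iterate_succ_apply', fwdDiff, ih, ih]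
    simp [nekD, Function.iterate_succ_apply']

theorem nekB_nat (k j : ℕ) : nekB k (j : ℂ) = (j.choose k : ℂ) := by
  induction k with
  | zero => simp [nekB]
  | succ k ih =>
    rw [nekB, Finset.prod_range_succ, ← nekB, ih]
    have h := Nat.choose_succ_right_eq j k
    have hk : ((k : ℂ) + 1) ≠ 0 := by exact_mod_cast Nat.succ_ne_zero k
    rcases le_or_gt k j with hkj | hkj
    · have h2 : (j.choose (k+1) : ℂ) * (k + 1) = j.choose k * (j - k) := by
        rw [← Nat.cast_sub hkj]; exact_mod_cast h
      field_simp
      linear_combination -h2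
    · simp [Nat.choose_eq_zero_of_lt hkj, Nat.choose_eq_zero_of_lt (Nat.lt_succ_of_lt hkj)]

theorem nekW_nat (G : V → V) (m : ℕ) (v : V) (j : ℕ) (hj : j ≤ m) :
    nekW G m v (j : ℂ) = G^[j] v := by
  have h := shift_eq_sum_fwdDiff_iter (h := 1) (fun j : ℕ => G^[j] v) j 0
  simp only [smul_eq_mul, mul_one, zero_add] at h
  rw [h, nekW]
  symm
  have : ∀ k, (j.choose k) • (fwdDiff (1:ℕ))^[k] (fun j : ℕ => G^[j] v) 0 = nekB k (j:ℂ) • nekD G k v := by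
    intro k
    rw [nekD_iter, nekB_nat, Nat.cast_smul_eq_nsmul]; rfl
  simp only [this]
  apply Finset.sum_subset
  · intro a ha; simp at *; omega
  · intro a _ ha
    simp at ha
    rw [nekB_nat, Nat.choose_eq_zero_of_lt (by omega)]; simp

theorem nekB_differentiable (k : ℕ) : Differentiable ℂ (nekB k) := by
  unfold nekB
  fun_prop

theorem nekW_differentiable (G : V → V) (m : ℕ) (v : V) : Differentiable ℂ (nekW G m v) := by
  unfold nekW
  have := nekB_differentiable
  fun_prop

theorem nekD_bound {G : V → V} {v : V} {r δ : ℝ} (hδ : 0 ≤ δ)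
    (hG : DifferentiableOn ℂ G (ball v r)) (hGδ : ∀ x ∈ ball v r, ‖G x - x‖ ≤ δ)
    {K : ℕ} (hK : 1 ≤ K) (hKδ : K * δ < r) :
    ‖nekD G K v‖ ≤ δ * (2 * K * δ / r) ^ (K - 1) := by
  have hK0 : (0:ℝ) < K := by exact_mod_cast hK
  have hr : 0 < r := lt_of_le_of_lt (by positivity) hKδ
  set η := r / K with hη
  have hηpos : 0 < η := by positivity
  have hδη : δ < η := by rw [hη, lt_div_iff₀ hK0]; linarith
  have key : ∀ k : ℕ, DifferentiableOn ℂ (nekD G (k+1)) (ball v (r - k * η)) ∧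
      ∀ x ∈ ball v (r - k * η), ‖nekD G (k+1) x‖ ≤ δ * (2 * δ / η) ^ k := by
    intro k
    induction k with
    | zero =>
      simp only [Nat.cast_zero, zero_mul, sub_zero, pow_zero, mul_one]
      exact ⟨hG.sub differentiableOn_id, fun x hx => hGδ x hx⟩
    | succ k ih =>
      obtain ⟨ih1, ih2⟩ := ih
      have hsub : ball v (r - ((k+1:ℕ):ℝ) * η) ⊆ ball v (r - k * η) := by
        apply ball_subset_ball; push_cast; nlinarith
      have hsub' : ball v (r - ((k+1:ℕ):ℝ) * η) ⊆ ball v r := by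
        apply ball_subset_ball
        have : 0 ≤ ((k+1:ℕ):ℝ) * η := by positivity
        linarith
      have hball : ∀ x ∈ ball v (r - ((k+1:ℕ):ℝ) * η), ball x η ⊆ ball v (r - k * η) := by
        intro x hx
        apply ball_subset_ball'
        rw [mem_ball] at hx; push_cast at hx; linarith
      have hGm : ∀ x ∈ ball v (r - ((k+1:ℕ):ℝ) * η), G x ∈ ball x η := by
        intro x hx
        rw [mem_ball, dist_eq_norm]
        exact lt_of_le_of_lt (hGδ x (hsub' hx)) hδη
      refine ⟨?_, ?_⟩
      · refine DifferentiableOn.sub (ih1.comp (hG.mono hsub') ?_) (ih1.mono hsub)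
        intro x hx
        exact hball x hx (hGm x hx)
      · intro x hx
        have := nek_cauchy_dist (ih1.mono (hball x hx)) (fun z hz => ih2 z (hball x hx hz)) (hGm x hx)
        calc ‖nekD G (k+1+1) x‖ = ‖nekD G (k+1) (G x) - nekD G (k+1) x‖ := rfl
          _ ≤ _ := this
          _ ≤ 2 * (δ * (2 * δ / η) ^ k) / η * δ := by
            gcongr; exact hGδ x (hsub' hx)
          _ = _ := by rw [pow_succ]; ring
  obtain ⟨_, h2⟩ := key (K - 1)
  have hK1 : K - 1 + 1 = K := by omega
  rw [hK1] at h2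
  have hc : ((K - 1 : ℕ) : ℝ) = K - 1 := by rw [Nat.cast_sub hK]; simp
  have := h2 v (mem_ball_self (by
    rw [hc]; have : (K:ℝ) * η = r := by rw [hη]; field_simp
    linarith))
  refine this.trans (le_of_eq ?_)
  congr 2
  rw [hη]; field_simp

theorem nekB_bound (k m : ℕ) (hk : k ≤ m) (t : ℂ) (ht : ‖t‖ ≤ 8 * m) :
    ‖nekB k t‖ ≤ (9 * m : ℝ) ^ k / k.factorial := by
  induction k with
  | zero => simp [nekB]
  | succ k ih =>
    rw [nekB, Finset.prod_range_succ, ← nekB, norm_mul, norm_div, pow_succ, Nat.factorial_succ]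
    have h1 : ‖t - k‖ ≤ 9 * m := by
      calc ‖t - k‖ ≤ ‖t‖ + ‖(k:ℂ)‖ := norm_sub_le _ _
        _ ≤ 8 * m + m := by
          gcongr
          rw [Complex.norm_natCast]; exact_mod_cast (by omega : k ≤ m)
        _ = _ := by ring
    have h2 : ‖((k:ℂ) + 1)‖ = k + 1 := by
      have := Complex.norm_natCast (k+1)
      push_cast at this; exact this
    rw [h2]
    calc ‖nekB k t‖ * (‖t - k‖ / (k+1)) ≤ ((9 * m : ℝ) ^ k / k.factorial) * (9 * m / (k+1)) := by
          gcongr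
          exact ih (by omega)
      _ = _ := by push_cast; field_simp

theorem nekW_bound {G : V → V} {v : V} {r δ : ℝ} (hδ : 0 ≤ δ) (hr : 0 < r)
    (hG : DifferentiableOn ℂ G (ball v r)) (hGδ : ∀ x ∈ ball v r, ‖G x - x‖ ≤ δ)
    {m : ℕ} (hm : 200 * (m * δ) ≤ r) (t : ℂ) (ht : ‖t‖ ≤ 8 * m) :
    ‖nekW G m v t - v‖ ≤ r / 4 := by
  rw [nekW, Finset.sum_range_succ']
  have h0 : nekB 0 t • nekD G 0 v = v := by simp [nekB, nekD]
  rw [h0, add_sub_cancel_right]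
  have hterm : ∀ k ∈ Finset.range m, ‖nekB (k+1) t • nekD G (k+1) v‖ ≤ (r / 8) * (1/2:ℝ)^k := by
    intro k hk
    rw [Finset.mem_range] at hk
    have hkm : ((k+1:ℕ):ℝ) ≤ m := by exact_mod_cast hk
    have hkδ : ((k+1:ℕ):ℝ) * δ ≤ m * δ := by gcongr
    have hb := nekB_bound (k+1) m hk t ht
    have hd := nekD_bound hδ hG hGδ (K := k+1) (by omega) (by
      have : 0 ≤ (m:ℝ) * δ := by positivity
      rcases eq_or_lt_of_le this with h | h <;> nlinarith)
    rw [norm_smul]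
    have hfac : ((k+1:ℕ):ℝ)^(k+1) / (k+1).factorial ≤ Real.exp 1 ^ (k+1) := by
      rw [← Real.exp_nat_mul, mul_one]
      exact Real.pow_div_factorial_le_exp _ (Nat.cast_nonneg _) _
    have he : Real.exp 1 ≤ 2.72 := by have := Real.exp_one_lt_d9; linarith
    calc ‖nekB (k+1) t‖ * ‖nekD G (k+1) v‖
        ≤ ((9 * m : ℝ) ^ (k+1) / (k+1).factorial) * (δ * (2 * (k+1:ℕ) * δ / r) ^ k) := by
          gcongr
          simpa using hd
      _ = (r / (2 * (k+1:ℕ))) * ((((k+1:ℕ):ℝ)^(k+1) / (k+1).factorial) * (18 * (m * δ) / r) ^ (k+1)) := by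
          have : ((k:ℝ)+1) ≠ 0 := by positivity
          push_cast
          simp only [div_pow, mul_pow]
          rw [show (18:ℝ)^(k+1) = 9^(k+1) * 2^(k+1) by rw [← mul_pow]; norm_num]
          field_simp
          ring
      _ ≤ (r / (2 * (k+1:ℕ))) * (Real.exp 1 ^ (k+1) * (18 * (m * δ) / r) ^ (k+1)) := by
          gcongr
      _ ≤ (r / 2) * ((1/4:ℝ)^(k+1)) := by
          rw [← mul_pow]
          gcongr
          · push_cast; nlinarith [(Nat.cast_nonneg k : (0:ℝ) ≤ k)]
          · have h18 : 18 * (m * δ) / r ≤ 18/200 := by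
              rw [div_le_div_iff₀ hr (by norm_num)]; nlinarith
            calc Real.exp 1 * (18 * (m * δ) / r) ≤ 2.72 * (18/200) := by gcongr
              _ ≤ 1/4 := by norm_num
      _ = (r / 8) * (1/4:ℝ)^k := by rw [pow_succ]; ring
      _ ≤ (r / 8) * (1/2:ℝ)^k := by gcongr; norm_num
  calc ‖∑ k ∈ Finset.range m, nekB (k+1) t • nekD G (k+1) v‖
      ≤ ∑ k ∈ Finset.range m, (r / 8) * (1/2:ℝ)^k := norm_sum_le_of_le _ hterm
    _ = (r/8) * ∑ k ∈ Finset.range m, (1/2:ℝ)^k := by rw [Finset.mul_sum]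
    _ ≤ (r/8) * 2 := by
        gcongr
        exact sum_geometric_two_le m
    _ = r / 4 := by ring

theorem nekB_deriv_zero (k : ℕ) : ‖deriv (nekB (k+1)) 0‖ ≤ 1 := by
  have h1 : nekB (k+1) = fun t : ℂ => t * ∏ i ∈ Finset.range k, ((t - ((i+1:ℕ):ℂ)) / (((i+1:ℕ):ℂ) + 1)) := by
    funext t
    rw [nekB, Finset.prod_range_succ']; simp [mul_comm]
  have hd : DifferentiableAt ℂ (fun t : ℂ => ∏ i ∈ Finset.range k, ((t - ((i+1:ℕ):ℂ)) / (((i+1:ℕ):ℂ) + 1))) 0 := by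
    fun_prop
  have h2 := ((hasDerivAt_id (0:ℂ)).mul hd.hasDerivAt).deriv
  rw [h1]
  simp only [Pi.mul_def, id] at h2
  rw [h2]
  simp only [one_mul, zero_mul, add_zero, norm_prod]
  apply Finset.prod_le_one
  · intros; positivity
  · intro i _
    rw [norm_div, zero_sub, norm_neg]
    have h2 : ‖(((i+1:ℕ):ℂ) + 1)‖ = (i+1:ℕ) + 1 := by
      have := Complex.norm_natCast (i+1+1)
      push_cast at this ⊢; exact this
    rw [h2, Complex.norm_natCast]
    apply div_le_one_of_le₀ <;> linarith [(Nat.cast_nonneg (i+1) : (0:ℝ) ≤ (i+1:ℕ))]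

/-- leading order of the interpolating vector field -/
theorem nekW_deriv {G : V → V} {v : V} {r δ : ℝ} (hδ : 0 ≤ δ) (hr : 0 < r)
    (hG : DifferentiableOn ℂ G (ball v r)) (hGδ : ∀ x ∈ ball v r, ‖G x - x‖ ≤ δ)
    {m : ℕ} (hm1 : 1 ≤ m) (hm : 200 * (m * δ) ≤ r) :
    ‖deriv (nekW G m v) 0 - (G v - v)‖ ≤ 16 * δ ^ 2 / r := by
  have hder : deriv (nekW G m v) 0 = ∑ k ∈ Finset.range (m+1), deriv (nekB k) 0 • nekD G k v := by
    unfold nekW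
    rw [deriv_fun_sum]
    · apply Finset.sum_congr rfl
      intro k _
      rw [deriv_smul_const ((nekB_differentiable k) 0)]
    · intro k _
      exact ((nekB_differentiable k) 0).smul_const _
  obtain ⟨p, rfl⟩ : ∃ p, m = p + 1 := ⟨m - 1, by omega⟩
  rw [hder, Finset.sum_range_succ', Finset.sum_range_succ']
  have h0 : deriv (nekB 0) 0 = 0 := by
    have : nekB 0 = fun _ => 1 := by funext; simp [nekB]
    rw [this]; simp
  have h1 : deriv (nekB (0+1)) 0 = 1 := by
    have : nekB (0+1) = fun t => t := by funext t; simp [nekB]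
    rw [this]; simp
  rw [h0, h1]
  have h2 : nekD G (0+1) v = G v - v := rfl
  rw [h2, one_smul, zero_smul, add_zero, add_sub_cancel_right]
  have hterm : ∀ k ∈ Finset.range p, ‖deriv (nekB (k+1+1)) 0 • nekD G (k+1+1) v‖
      ≤ (8 * δ^2 / r) * (1/2:ℝ)^k := by
    intro k hk
    rw [Finset.mem_range] at hk
    have hkm : ((k+1+1:ℕ):ℝ) ≤ (p+1:ℕ) := by exact_mod_cast (by omega)
    have hkδ : ((k+1+1:ℕ):ℝ) * δ ≤ (p+1:ℕ) * δ := by gcongr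
    have hd := nekD_bound hδ hG hGδ (K := k+1+1) (by omega) (by
      have : 0 ≤ ((p+1:ℕ):ℝ) * δ := by positivity
      rcases eq_or_lt_of_le this with h | h <;> nlinarith)
    rw [norm_smul]
    have hq : 2 * ((k+1+1:ℕ):ℝ) * δ / r ≤ 1/4 := by
      rw [div_le_div_iff₀ hr (by norm_num)]
      have : 0 ≤ ((p+1:ℕ):ℝ) * δ := by positivity
      nlinarith
    have hk2 : ((k+1+1:ℕ):ℝ) ≤ 4 * 2 ^ k := by
      have : k + 1 + 1 < 2 ^ (k+1+1) := Nat.lt_two_pow_self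
      rw [pow_succ, pow_succ] at this
      have h' : k+1+1 ≤ 4 * 2^k := by omega
      exact_mod_cast h'
    calc ‖deriv (nekB (k+1+1)) 0‖ * ‖nekD G (k+1+1) v‖
        ≤ 1 * (δ * (2 * (k+1+1:ℕ) * δ / r) ^ (k+1)) := by
          gcongr
          · exact nekB_deriv_zero _
          · simpa using hd
      _ = δ * (2 * (k+1+1:ℕ) * δ / r) * (2 * (k+1+1:ℕ) * δ / r) ^ k := by rw [pow_succ]; ring
      _ ≤ δ * (2 * (4 * 2^k) * δ / r) * (1/4) ^ k := by gcongr
      _ = _ := by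
        rw [show (1/4:ℝ) = (1/2)*(1/2) by norm_num, mul_pow]
        have : (2:ℝ)^k * (1/2)^k = 1 := by rw [← mul_pow]; norm_num
        calc _ = (8 * δ^2/r) * (1/2)^k * (2^k * (1/2)^k) := by ring
          _ = _ := by rw [this, mul_one]
  calc _ ≤ ∑ k ∈ Finset.range p, (8 * δ^2 / r) * (1/2:ℝ)^k := norm_sum_le_of_le _ hterm
    _ = (8 * δ^2 / r) * ∑ k ∈ Finset.range p, (1/2:ℝ)^k := by rw [Finset.mul_sum]
    _ ≤ (8 * δ^2 / r) * 2 := by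
        gcongr
        exact sum_geometric_two_le p
    _ = _ := by ring

theorem nek_factor [CompleteSpace V] {U : Set ℂ} (hU : IsOpen U) {u : ℂ → V} (hu : DifferentiableOn ℂ u U)
    (N : ℕ) (hz : ∀ j : ℕ, j < N → (j:ℂ) ∈ U ∧ u j = 0) :
    ∃ w : ℂ → V, DifferentiableOn ℂ w U ∧
      ∀ t, u t = (∏ j ∈ Finset.range N, (t - (j:ℂ))) • w t := by
  induction N with
  | zero => exact ⟨u, hu, by simp⟩
  | succ N ih =>
    obtain ⟨w, hw, hw2⟩ := ih (fun j hj => hz j (by omega))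
    have hN := hz N (by omega)
    have hwN : w N = 0 := by
      have h := hw2 N
      rw [hN.2] at h
      rcases smul_eq_zero.mp h.symm with h | h
      · rw [Finset.prod_eq_zero_iff] at h
        obtain ⟨a, ha, h⟩ := h
        rw [Finset.mem_range] at ha
        rw [sub_eq_zero] at h
        have : N = a := by exact_mod_cast h
        omega
      · exact h
    refine ⟨dslope w N, (Complex.differentiableOn_dslope (hU.mem_nhds hN.1)).2 hw, ?_⟩
    intro t
    rw [hw2 t, Finset.prod_range_succ, mul_smul, sub_smul_dslope, hwN, sub_zero]

theorem nek_zeros [CompleteSpace V] {m : ℕ} (hm : 1 ≤ m) {u : ℂ → V} {M : ℝ} (hM0 : 0 ≤ M)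
    (hu : DifferentiableOn ℂ u (ball 0 (8 * m)))
    (hM : ∀ t ∈ ball (0:ℂ) (8 * m), ‖u t‖ ≤ M) (hz : ∀ j : ℕ, j < m → u j = 0) :
    ‖deriv u 0‖ ≤ M * Real.exp (-m) := by
  have hm0 : (1:ℝ) ≤ m := by exact_mod_cast hm
  obtain ⟨w, hw, hw2⟩ := nek_factor isOpen_ball hu m (fun j hj => ⟨by
    rw [mem_ball_zero_iff, Complex.norm_natCast]
    have : (j:ℝ) < m := by exact_mod_cast hj
    linarith, hz j hj⟩)
  have hcl : closedBall (0:ℂ) (7*m) ⊆ ball 0 (8*m) := closedBall_subset_ball (by linarith)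
  have hdc : DiffContOnCl ℂ w (ball (0:ℂ) (7*m)) := by
    apply DifferentiableOn.diffContOnCl
    rw [closure_ball _ (by positivity)]
    exact hw.mono hcl
  have hwb : ∀ z ∈ closedBall (0:ℂ) (7*m), ‖w z‖ ≤ M / (6*m)^m := by
    intro z hz
    rw [← closure_ball (0:ℂ) (by positivity : (7*(m:ℝ)) ≠ 0)] at hz
    refine Complex.norm_le_of_forall_mem_frontier_norm_le isBounded_ball hdc ?_ hz
    intro y hy
    rw [frontier_ball _ (by positivity)] at hy
    have hy' : ‖y‖ = 7*m := by simpa using hy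
    have h1 := hM y (hcl (sphere_subset_closedBall hy))
    rw [hw2 y, norm_smul, norm_prod] at h1
    rw [le_div_iff₀ (by positivity), mul_comm]
    refine le_trans ?_ h1
    gcongr
    calc (6*(m:ℝ))^m = ∏ j ∈ Finset.range m, (6*(m:ℝ)) := by simp
      _ ≤ _ := by
        apply Finset.prod_le_prod
        · intros; positivity
        · intro j hj
          rw [Finset.mem_range] at hj
          have hj' : (j:ℝ) ≤ m := by exact_mod_cast hj.le
          have := norm_sub_norm_le y (j:ℂ)
          rw [hy', Complex.norm_natCast] at this
          linarith
  have hub : ∀ t ∈ sphere (0:ℂ) 1, ‖u t‖ ≤ M * Real.exp (-m) := by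
    intro t ht
    have ht' : ‖t‖ = 1 := by simpa using ht
    rw [hw2 t, norm_smul, norm_prod]
    have h1 : ∏ j ∈ Finset.range m, ‖t - (j:ℂ)‖ ≤ (2*(m:ℝ))^m := by
      calc _ ≤ ∏ j ∈ Finset.range m, (2*(m:ℝ)) := by
            apply Finset.prod_le_prod
            · intros; positivity
            · intro j hj
              rw [Finset.mem_range] at hj
              have hj' : (j:ℝ) ≤ m := by exact_mod_cast hj.le
              have := norm_sub_le t (j:ℂ)
              rw [ht', Complex.norm_natCast] at this
              linarith
        _ = _ := by simp
    calc _ ≤ (2*(m:ℝ))^m * (M / (6*m)^m) := by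
          gcongr
          apply hwb
          rw [mem_closedBall_zero_iff]; linarith
      _ = M * (1/3)^m := by
          rw [show (6*(m:ℝ)) = 3 * (2*m) by ring, mul_pow 3, one_div, inv_pow]
          field_simp
      _ ≤ _ := by
          gcongr
          rw [show -(m:ℝ) = m * (-1) by ring, Real.exp_nat_mul]
          gcongr
          rw [Real.exp_neg, one_div]
          gcongr
          have := Real.exp_one_lt_d9; linarith
  have := Complex.norm_deriv_le_of_forall_mem_sphere_norm_le (c := 0) (R := 1) one_pos (f := u) (by
    apply DifferentiableOn.diffContOnCl
    rw [closure_ball _ (by norm_num)]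
    exact hu.mono (closedBall_subset_ball (by linarith))) hub
  simpa using this

/-- approximate equivariance of the interpolating vector field -/
theorem nek_equivariance [CompleteSpace V] {G : V → V} {v : V} {r δ : ℝ} (hδ : 0 ≤ δ) (hr : 0 < r)
    (hG : DifferentiableOn ℂ G (ball v r)) (hGδ : ∀ x ∈ ball v r, ‖G x - x‖ ≤ δ)
    {m : ℕ} (hm1 : 1 ≤ m) (hm : 400 * (m * δ) ≤ r) :
    ‖fderiv ℂ G v (deriv (nekW G m v) 0) - deriv (nekW G m (G v)) 0‖ ≤ r * Real.exp (-m) := by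
  have hm0 : (1:ℝ) ≤ m := by exact_mod_cast hm1
  have hδr : 400 * δ ≤ r := by nlinarith
  have hvb : v ∈ ball v r := mem_ball_self hr
  have hsub : ball (G v) (r/2) ⊆ ball v r := by
    apply ball_subset_ball'
    rw [dist_eq_norm]; have := hGδ v hvb; linarith
  have hW1 : ∀ t ∈ ball (0:ℂ) (8*m), ‖nekW G m v t - v‖ ≤ r/4 := by
    intro t ht
    rw [mem_ball_zero_iff] at ht
    exact nekW_bound hδ hr hG hGδ (by nlinarith [mul_nonneg (Nat.cast_nonneg (α := ℝ) m) hδ]) t ht.le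
  have hW2 : ∀ t ∈ ball (0:ℂ) (8*m), ‖nekW G m (G v) t - G v‖ ≤ r/2/4 := by
    intro t ht
    rw [mem_ball_zero_iff] at ht
    exact nekW_bound hδ (by linarith) (hG.mono hsub) (fun x hx => hGδ x (hsub hx))
      (by linarith) t ht.le
  have hWb : ∀ t ∈ ball (0:ℂ) (8*m), nekW G m v t ∈ ball v r := by
    intro t ht
    rw [mem_ball, dist_eq_norm]; linarith [hW1 t ht]
  have hW0 : nekW G m v 0 = v := by
    have := nekW_nat G m v 0 (by omega)
    simpa using this
  have hz0 : (0:ℂ) ∈ ball (0:ℂ) (8*m) := by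
    apply mem_ball_self; positivity
  have hdW := nekW_differentiable G m v
  have hdW' := nekW_differentiable G m (G v)
  have hmain := nek_zeros hm1 (u := fun t => G (nekW G m v t) - nekW G m (G v) t) hr.le
    ((hG.comp hdW.differentiableOn hWb).sub hdW'.differentiableOn) (by
      intro t ht
      have h1 := hW1 t ht
      have h2 := hW2 t ht
      have h3 := hGδ _ (hWb t ht)
      have h4 := hGδ v hvb
      calc ‖G (nekW G m v t) - nekW G m (G v) t‖
          = ‖(G (nekW G m v t) - nekW G m v t) + (nekW G m v t - v) - (G v - v)
              - (nekW G m (G v) t - G v)‖ := by congr 1; abel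
        _ ≤ ‖G (nekW G m v t) - nekW G m v t‖ + ‖nekW G m v t - v‖ + ‖G v - v‖
            + ‖nekW G m (G v) t - G v‖ := by
            refine (norm_sub_le _ _).trans ?_
            gcongr
            refine (norm_sub_le _ _).trans ?_
            gcongr
            exact norm_add_le _ _
        _ ≤ r := by linarith) (by
      intro j hj
      rw [nekW_nat _ _ _ _ hj.le, nekW_nat _ _ _ _ hj.le, ← Function.iterate_succ_apply' G,
        Function.iterate_succ_apply, sub_self])
  have hGv : HasFDerivAt G (fderiv ℂ G v) (nekW G m v 0) := by
    rw [hW0]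
    exact (hG.differentiableAt (isOpen_ball.mem_nhds hvb)).hasFDerivAt
  have hder := (hGv.comp_hasDerivAt (0:ℂ) (hdW 0).hasDerivAt).sub (hdW' 0).hasDerivAt
  have := hder.deriv
  simp only [Pi.sub_def, Function.comp_def] at this
  rw [← this]
  exact hmain
end

end NekPart1

section NekPart2

open Metric Set

theorem nek_inv {E : Type*} [NormedAddCommGroup E] [NormedSpace ℂ E] [CompleteSpace E]
    {W W2 : Set E} (hW : IsOpen W) (hW2 : IsOpen W2) {e : ℝ} (he : 0 < e)
    (hth : ∀ x ∈ W, closedBall x e ⊆ W2) {τ : E → E} (hτ : DifferentiableOn ℂ τ W2)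
    (hb : ∀ x ∈ W2, ‖τ x‖ ≤ e / 2)
    (hl : ∀ x ∈ W2, ∀ y ∈ W2, ‖τ x - τ y‖ ≤ 1 / 2 * ‖x - y‖) :
    ∃ Q : E → E, DifferentiableOn ℂ Q W ∧ (∀ x ∈ W, Q x ∈ W2 ∧ Q x + τ (Q x) = x) ∧
      (∀ x ∈ W, ∀ y ∈ W2, y + τ y = x → y = Q x) := by
  classical
  have hex : ∀ x ∈ W, ∃ y ∈ W2, y + τ y = x := by
    intro x hx
    have hmaps : MapsTo (fun y => x - τ y) (closedBall x e) (closedBall x e) := by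
      intro y hy
      rw [mem_closedBall, dist_eq_norm]
      have := hb y (hth x hx hy)
      simp only [sub_sub_cancel_left, norm_neg]; linarith
    have hcontr : ContractingWith (1/2 : NNReal) (hmaps.restrict) := by
      refine ⟨by rw [div_lt_one (by norm_num)]; norm_num, ?_⟩
      apply LipschitzWith.of_dist_le_mul
      intro p q
      rw [Subtype.dist_eq, Subtype.dist_eq, dist_eq_norm, dist_eq_norm]
      have := hl q.1 (hth x hx q.2) p.1 (hth x hx p.2)
      rw [norm_sub_rev q.1] at this
      simpa using this
    obtain ⟨y, hy, hfix, _⟩ := hcontr.exists_fixedPoint' isClosed_closedBall.isComplete hmaps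
      (mem_closedBall_self he.le) (edist_ne_top _ _)
    refine ⟨y, hth x hx hy, ?_⟩
    have : x - τ y = y := hfix
    exact eq_sub_iff_add_eq.mp this.symm
  choose! Q hQ using hex
  have hanti : ∀ y ∈ W2, ∀ z ∈ W2, ‖y - z‖ ≤ 2 * ‖(y + τ y) - (z + τ z)‖ := by
    intro y hy z hz
    have h1 := hl y hy z hz
    have h2 : ‖y - z‖ ≤ ‖(y + τ y) - (z + τ z)‖ + ‖τ y - τ z‖ := by
      calc ‖y - z‖ = ‖((y + τ y) - (z + τ z)) - (τ y - τ z)‖ := by congr 1; abel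
        _ ≤ _ := norm_sub_le _ _
    linarith
  refine ⟨Q, ?_, fun x hx => hQ x hx, ?_⟩
  · intro x hx
    apply DifferentiableAt.differentiableWithinAt
    have hcont : ContinuousAt Q x := by
      rw [Metric.continuousAt_iff]
      intro ε' hε'
      obtain ⟨ε1, hε1, hball⟩ := Metric.isOpen_iff.mp hW x hx
      refine ⟨min ε1 (ε'/2), by positivity, fun {y} hy => ?_⟩
      have hyW : y ∈ W := hball (lt_of_lt_of_le hy (min_le_left _ _))
      have := hanti _ (hQ y hyW).1 _ (hQ x hx).1
      rw [(hQ y hyW).2, (hQ x hx).2] at this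
      rw [dist_eq_norm] at hy ⊢
      have := lt_of_lt_of_le hy (min_le_right _ _)
      linarith
    have hd := (hτ.differentiableAt (hW2.mem_nhds (hQ x hx).1)).hasFDerivAt
    have hnorm : ‖-fderiv ℂ τ (Q x)‖ < 1 := by
      rw [norm_neg]
      have : ‖fderiv ℂ τ (Q x)‖ ≤ 1/2 := by
        apply norm_fderiv_le_of_lip' _ (by norm_num)
        filter_upwards [hW2.mem_nhds (hQ x hx).1] with z hz
        exact hl z hz _ (hQ x hx).1
      linarith
    let A := ContinuousLinearEquiv.ofUnit (Units.oneSub (-fderiv ℂ τ (Q x)) hnorm)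
    have hA : (A : E →L[ℂ] E) = ContinuousLinearMap.id ℂ E + fderiv ℂ τ (Q x) := by
      ext z
      change ((1 : E →L[ℂ] E) - (-fderiv ℂ τ (Q x))) z = _
      simp
    have hf : HasFDerivAt (fun y => y + τ y) (A : E →L[ℂ] E) (Q x) := by
      rw [hA]; exact (hasFDerivAt_id _).add hd
    have := HasFDerivAt.of_local_left_inverse hcont hf (by
      filter_upwards [hW.mem_nhds hx] with y hy
      exact (hQ y hy).2)
    exact this.differentiableAt
  · intro x hx y hy hyx
    have := hanti y hy _ (hQ x hx).1
    rw [hyx, (hQ x hx).2, sub_self, norm_zero, mul_zero] at this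
    exact sub_eq_zero.mp (norm_le_zero_iff.mp this)

/-- extended phase space -/
abbrev NV (d : ℕ) := CPhase d × ℂ

/-- the contact form `J dφ - dα` -/
def nekθ {d : ℕ} (v w : NV d) : ℂ := ∑ i, v.1.1 i * w.1.2 i - w.2

theorem nekθ_sub {d : ℕ} (v w w' : NV d) : nekθ v (w - w') = nekθ v w - nekθ v w' := by
  simp [nekθ, mul_sub, Finset.sum_sub_distrib]; ring

theorem nek_dot_bound {d : ℕ} (x y : Fin d → ℂ) : ‖∑ i, x i * y i‖ ≤ d * ‖x‖ * ‖y‖ := by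
  calc ‖∑ i, x i * y i‖ ≤ ∑ i : Fin d, ‖x‖ * ‖y‖ := by
        apply norm_sum_le_of_le
        intro i _
        rw [norm_mul]
        gcongr
        · exact norm_le_pi_norm x i
        · exact norm_le_pi_norm y i
    _ = _ := by simp; ring

theorem nekθ_bound {d : ℕ} (v w : NV d) : ‖nekθ v w‖ ≤ (d * ‖v.1.1‖ + 1) * ‖w‖ := by
  have h1 : ‖w.1.2‖ ≤ ‖w‖ := (norm_snd_le w.1).trans (norm_fst_le w)
  have h2 : ‖w.2‖ ≤ ‖w‖ := norm_snd_le w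
  calc ‖nekθ v w‖ ≤ ‖∑ i, v.1.1 i * w.1.2 i‖ + ‖w.2‖ := norm_sub_le _ _
    _ ≤ d * ‖v.1.1‖ * ‖w‖ + ‖w‖ := by
      gcongr
      exact (nek_dot_bound _ _).trans (by gcongr)
    _ = _ := by ring

/-- the approximate energy -/
noncomputable def nekK {d : ℕ} (G : NV d → NV d) (m : ℕ) (v : NV d) : ℂ :=
  nekθ v (deriv (nekW G m v) 0)

theorem nek_energy_drift {d : ℕ} {G : NV d → NV d} {v : NV d} {r δ : ℝ} (hδ : 0 ≤ δ) (hr : 0 < r)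
    (hG : DifferentiableOn ℂ G (ball v r)) (hGδ : ∀ x ∈ ball v r, ‖G x - x‖ ≤ δ)
    (hct : ∀ w, nekθ (G v) (fderiv ℂ G v w) = nekθ v w)
    {m : ℕ} (hm1 : 1 ≤ m) (hm : 400 * (m * δ) ≤ r) :
    ‖nekK G m (G v) - nekK G m v‖ ≤ (d * ‖(G v).1.1‖ + 1) * (r * Real.exp (-m)) := by
  have h := nek_equivariance hδ hr hG hGδ hm1 hm
  rw [nekK, nekK, ← hct, ← nekθ_sub]
  refine (nekθ_bound _ _).trans ?_
  rw [norm_sub_rev]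
  gcongr

theorem nek_energy_lead {d : ℕ} {G : NV d → NV d} {v : NV d} {r δ : ℝ} (hδ : 0 ≤ δ) (hr : 0 < r)
    (hG : DifferentiableOn ℂ G (ball v r)) (hGδ : ∀ x ∈ ball v r, ‖G x - x‖ ≤ δ)
    {m : ℕ} (hm1 : 1 ≤ m) (hm : 400 * (m * δ) ≤ r) :
    ‖nekK G m v - nekθ v (G v - v)‖ ≤ (d * ‖v.1.1‖ + 1) * (16 * δ ^ 2 / r) := by
  have h := nekW_deriv hδ hr hG hGδ hm1
    (by nlinarith [mul_nonneg (Nat.cast_nonneg (α := ℝ) m) hδ])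
  rw [nekK, ← nekθ_sub]
  refine (nekθ_bound _ _).trans ?_
  gcongr

/-- complex domain -/
def nekDom (d : ℕ) (a b : ℝ) : Set (CPhase d) := {x | ‖x.1‖ < a ∧ ∀ i, |(x.2 i).im| < b}

theorem nekDom_isOpen (d : ℕ) (a b : ℝ) : IsOpen (nekDom d a b) := by
  have : nekDom d a b = {x : CPhase d | ‖x.1‖ < a} ∩ ⋂ i, {x : CPhase d | |(x.2 i).im| < b} := by
    ext x; simp [nekDom]
  rw [this]
  refine IsOpen.inter (isOpen_lt (by fun_prop) (by fun_prop)) (isOpen_iInter_of_finite fun i => ?_)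
  refine isOpen_lt ?_ continuous_const
  exact (Complex.continuous_im.comp ((continuous_apply i).comp continuous_snd)).abs

theorem nekDom_convex (d : ℕ) (a b : ℝ) : Convex ℝ (nekDom d a b) := by
  intro x hx y hy p q hp hq hpq
  refine ⟨?_, fun i => ?_⟩
  · have := (convex_ball (0 : Fin d → ℂ) a) (x := x.1) (y := y.1) (by simpa using hx.1)
      (by simpa using hy.1) hp hq hpq
    simpa using this
  · have := (convex_ball (0 : ℝ) b) (x := (x.2 i).im) (y := (y.2 i).im)
      (by simpa using hx.2 i) (by simpa using hy.2 i) hp hq hpq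
    simpa using this

theorem nekDom_closedBall {d : ℕ} {a b e : ℝ} {x : CPhase d} (hx : x ∈ nekDom d (a - e) (b - e)) :
    closedBall x e ⊆ nekDom d a b := by
  intro y hy
  rw [mem_closedBall, dist_eq_norm] at hy
  have h1 : ‖y.1 - x.1‖ ≤ e := (norm_fst_le (y - x)).trans hy
  have h2 : ‖y.2 - x.2‖ ≤ e := (norm_snd_le (y - x)).trans hy
  refine ⟨?_, fun i => ?_⟩
  · have := norm_sub_norm_le y.1 x.1
    linarith [hx.1]
  · have h3 : |(y.2 i).im - (x.2 i).im| ≤ e := by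
      rw [← Complex.sub_im]
      exact (Complex.abs_im_le_norm _).trans ((norm_le_pi_norm (y.2 - x.2) i).trans h2)
    have := abs_sub_abs_le_abs_sub (y.2 i).im (x.2 i).im
    linarith [hx.2 i]

theorem nekDom_mono {d : ℕ} {a b a' b' : ℝ} (ha : a ≤ a') (hb : b ≤ b') :
    nekDom d a b ⊆ nekDom d a' b' :=
  fun _ hx => ⟨hx.1.trans_le ha, fun i => (hx.2 i).trans_le hb⟩

noncomputable def nekGJ {d : ℕ} (χ : CPhase d → ℂ) (x : CPhase d) : Fin d → ℂ :=
  fun i => fderiv ℂ χ x (Pi.single i 1, 0)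

noncomputable def nekGφ {d : ℕ} (χ : CPhase d → ℂ) (x : CPhase d) : Fin d → ℂ :=
  fun i => fderiv ℂ χ x (0, Pi.single i 1)

theorem nek_fderiv_decomp {d : ℕ} (L : CPhase d →L[ℂ] ℂ) (w : CPhase d) :
    L w = ∑ i, L (Pi.single i 1, 0) * w.1 i + ∑ i, L (0, Pi.single i 1) * w.2 i := by
  have h1 : w = ∑ i, (w.1 i • ((Pi.single i 1, 0) : CPhase d) + w.2 i • ((0, Pi.single i 1) : CPhase d)) := by
    ext j
    · simp [Prod.fst_sum, Finset.sum_apply, Pi.single_apply]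
    · simp [Prod.snd_sum, Finset.sum_apply, Pi.single_apply]
  conv_lhs => rw [h1]
  rw [map_sum, ← Finset.sum_add_distrib]
  apply Finset.sum_congr rfl
  intro i _
  rw [map_add, map_smul, map_smul, smul_eq_mul, smul_eq_mul]; ring

theorem nek_single_norm {d : ℕ} (i : Fin d) : ‖(Pi.single i 1 : Fin d → ℂ)‖ ≤ 1 := by
  rw [pi_norm_le_iff_of_nonneg zero_le_one]
  intro j
  by_cases h : j = i
  · subst h; simp
  · simp [h]

theorem nekGJ_bound {d : ℕ} {χ : CPhase d → ℂ} {x : CPhase d} {c : ℝ} (hc : ‖fderiv ℂ χ x‖ ≤ c) :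
    ‖nekGJ χ x‖ ≤ c := by
  have hc0 : 0 ≤ c := (norm_nonneg _).trans hc
  rw [pi_norm_le_iff_of_nonneg hc0]
  intro i
  refine ((fderiv ℂ χ x).le_opNorm _).trans ?_
  have : ‖((Pi.single i 1, 0) : CPhase d)‖ ≤ 1 := by
    rw [Prod.norm_def]; simpa using nek_single_norm i
  calc _ ≤ c * 1 := by gcongr
    _ = c := mul_one c

theorem nekGφ_bound {d : ℕ} {χ : CPhase d → ℂ} {x : CPhase d} {c : ℝ} (hc : ‖fderiv ℂ χ x‖ ≤ c) :
    ‖nekGφ χ x‖ ≤ c := by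
  have hc0 : 0 ≤ c := (norm_nonneg _).trans hc
  rw [pi_norm_le_iff_of_nonneg hc0]
  intro i
  refine ((fderiv ℂ χ x).le_opNorm _).trans ?_
  have : ‖((0, Pi.single i 1) : CPhase d)‖ ≤ 1 := by
    rw [Prod.norm_def]; simpa using nek_single_norm i
  calc _ ≤ c * 1 := by gcongr
    _ = c := mul_one c

end NekPart2

section NekPart3

open Metric Set

theorem nek_step {d : ℕ} {a b e μ : ℝ} (he : 0 < e) (ha : 0 ≤ a) {χ : CPhase d → ℂ}
    (hχ : AnalyticOnNhd ℂ χ (nekDom d a b)) (hb : ∀ x ∈ nekDom d a b, ‖χ x‖ ≤ μ)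
    (hμ0 : 0 ≤ μ) (hμ : 8 * μ ≤ e ^ 2) :
    ∃ G : NV d → NV d,
      DifferentiableOn ℂ G {v | v.1 ∈ nekDom d (a - 3 * e) (b - 3 * e)} ∧
      (∀ v : NV d, v.1 ∈ nekDom d (a - 3 * e) (b - 3 * e) →
        ‖G v - v‖ ≤ (2 / e * (1 + d * a) + 1) * μ ∧
        (∀ w, nekθ (G v) (fderiv ℂ G v w) = nekθ v w) ∧
        (((G v).1.1, v.1.2) : CPhase d) ∈ nekDom d a b ∧
        (G v).2 - v.2 = ∑ i, (G v).1.1 i * ((G v).1.2 i - v.1.2 i) - χ ((G v).1.1, v.1.2) ∧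
        (∀ y ∈ nekDom d (a - 2 * e) (b - 2 * e), y.1 + nekGφ χ y = v.1.1 → y.2 = v.1.2 →
          (G v).1 = (y.1, y.2 + nekGJ χ y))) := by
  have hd1 : DifferentiableOn ℂ χ (nekDom d a b) := hχ.differentiableOn
  have hopen := nekDom_isOpen d a b
  have hfd : ∀ x ∈ nekDom d (a - e) (b - e), ‖fderiv ℂ χ x‖ ≤ 2 * μ / e := by
    intro x hx
    have hsub : ball x e ⊆ nekDom d a b := ball_subset_closedBall.trans (nekDom_closedBall hx)
    exact nek_cauchy_fderiv he (hd1.mono hsub) (fun z hz => hb z (hsub hz))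
  have hdd : DifferentiableOn ℂ (fderiv ℂ χ) (nekDom d a b) := hχ.fderiv.differentiableOn
  have hdGJ : DifferentiableOn ℂ (nekGJ χ) (nekDom d a b) := by
    rw [differentiableOn_pi]
    intro i
    exact hdd.clm_apply (differentiableOn_const _)
  have hdGφ : DifferentiableOn ℂ (nekGφ χ) (nekDom d a b) := by
    rw [differentiableOn_pi]
    intro i
    exact hdd.clm_apply (differentiableOn_const _)
  set τ : CPhase d → CPhase d := fun x => (nekGφ χ x, 0) with hτ
  have hdτ : DifferentiableOn ℂ τ (nekDom d a b) := hdGφ.prodMk (differentiableOn_const _)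
  have hτb : ∀ x ∈ nekDom d (a - e) (b - e), ‖τ x‖ ≤ 2 * μ / e := by
    intro x hx
    rw [hτ, Prod.norm_def]
    simp only [norm_zero]
    exact max_le (nekGφ_bound (hfd x hx)) (by positivity)
  have hs21 : nekDom d (a - 2 * e) (b - 2 * e) ⊆ nekDom d (a - e) (b - e) :=
    nekDom_mono (by linarith) (by linarith)
  have hs10 : nekDom d (a - e) (b - e) ⊆ nekDom d a b :=
    nekDom_mono (by linarith) (by linarith)
  have hs20 := hs21.trans hs10
  have hτl : ∀ x ∈ nekDom d (a - 2 * e) (b - 2 * e), ∀ y ∈ nekDom d (a - 2 * e) (b - 2 * e),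
      ‖τ x - τ y‖ ≤ 1 / 2 * ‖x - y‖ := by
    intro x hx y hy
    refine Convex.norm_image_sub_le_of_norm_fderiv_le (𝕜 := ℂ)
      (s := nekDom d (a - 2 * e) (b - 2 * e)) (f := τ)
      (fun z hz => hdτ.differentiableAt (hopen.mem_nhds (hs20 hz))) ?_
      (nekDom_convex d _ _) hy hx
    intro z hz
    have hsub : ball z e ⊆ nekDom d (a - e) (b - e) :=
      ball_subset_closedBall.trans (nekDom_closedBall (by
        rw [show a - e - e = a - 2 * e by ring, show b - e - e = b - 2 * e by ring]; exact hz))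
    refine (nek_cauchy_fderiv he (hdτ.mono (hsub.trans hs10)) (fun q hq => hτb q (hsub hq))).trans ?_
    rw [div_le_iff₀ he, ← mul_div_assoc, div_le_iff₀ he]
    nlinarith
  have he2 : 2 * μ / e ≤ e / 2 := by
    rw [div_le_div_iff₀ he (by norm_num)]; nlinarith
  obtain ⟨Q, hQd, hQ, hQu⟩ := nek_inv (nekDom_isOpen d (a - 3 * e) (b - 3 * e))
    (nekDom_isOpen d (a - 2 * e) (b - 2 * e)) he (τ := τ)
    (fun x hx => nekDom_closedBall (by
        rw [show a - 2 * e - e = a - 3 * e by ring, show b - 2 * e - e = b - 3 * e by ring]; exact hx))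
    (hdτ.mono hs20) (fun x hx => (hτb x (hs21 hx)).trans he2) hτl
  have hQ2 : ∀ x ∈ nekDom d (a - 3 * e) (b - 3 * e), (Q x).2 = x.2 := by
    intro x hx
    have := congrArg Prod.snd (hQ x hx).2
    simpa [hτ] using this
  have hQ1 : ∀ x ∈ nekDom d (a - 3 * e) (b - 3 * e), (Q x).1 + nekGφ χ (Q x) = x.1 := by
    intro x hx
    have := congrArg Prod.fst (hQ x hx).2
    simpa [hτ] using this
  set G : NV d → NV d := fun v => (((Q v.1).1, (Q v.1).2 + nekGJ χ (Q v.1)),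
    v.2 + ∑ i, (Q v.1).1 i * nekGJ χ (Q v.1) i - χ (Q v.1)) with hG
  have hder : ∀ v : NV d, v.1 ∈ nekDom d (a - 3 * e) (b - 3 * e) →
      ∃ G' : NV d →L[ℂ] NV d, HasFDerivAt G G' v ∧ ∀ w, nekθ (G v) (G' w) = nekθ v w := by
    intro v hv
    have hL := (hQd.differentiableAt ((nekDom_isOpen d _ _).mem_nhds hv)).hasFDerivAt
    set L := fderiv ℂ Q v.1
    have hy := hs20 (hQ v.1 hv).1
    have hΓ := (hdGJ.differentiableAt (hopen.mem_nhds hy)).hasFDerivAt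
    have hX := (hd1.differentiableAt (hopen.mem_nhds hy)).hasFDerivAt
    have hLv : HasFDerivAt (fun v : NV d => Q v.1) (L.comp (ContinuousLinearMap.fst ℂ _ _)) v :=
      HasFDerivAt.comp v hL hasFDerivAt_fst
    have hΓv := HasFDerivAt.comp v hΓ hLv
    have hXv := HasFDerivAt.comp v hX hLv
    have hL2 : ∀ w, (L w).2 = w.2 := by
      intro w
      have h1 : HasFDerivAt (fun x => (Q x).2) ((ContinuousLinearMap.snd ℂ _ _).comp L) v.1 :=
        HasFDerivAt.comp v.1 hasFDerivAt_snd hL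
      have h2 : HasFDerivAt (fun x : CPhase d => x.2) ((ContinuousLinearMap.snd ℂ _ _)) v.1 :=
        hasFDerivAt_snd
      have h3 := h2.congr_of_eventuallyEq (f₁ := fun x => (Q x).2) (by
        filter_upwards [(nekDom_isOpen d _ _).mem_nhds hv] with x hx
        exact hQ2 x hx)
      have := congrArg (fun T => T w) (h1.unique h3)
      simpa using this
    have hc1 := hLv.fst
    have hc2 := hLv.snd.add hΓv
    have hs : HasFDerivAt (fun v : NV d => ∑ i, (Q v.1).1 i * nekGJ χ (Q v.1) i) _ v :=
      HasFDerivAt.fun_sum (u := Finset.univ) (fun i _ =>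
        (hasFDerivAt_pi'.mp hc1 i).mul (hasFDerivAt_pi'.mp hΓv i))
    have hc3 := ((hasFDerivAt_snd (𝕜 := ℂ) (p := v)).add hs).sub hXv
    refine ⟨_, (hc1.prodMk hc2).prodMk hc3, ?_⟩
    intro w
    have hdec := nek_fderiv_decomp (fderiv ℂ χ (Q v.1)) (L w.1)
    have h1 := hQ1 v.1 hv
    simp only [nekθ, hG]
    simp [ContinuousLinearMap.sum_apply, Finset.sum_add_distrib, mul_add, hL2]
    rw [hdec, ← h1]
    simp only [hL2, Pi.add_apply, add_mul, Finset.sum_add_distrib, nekGJ, nekGφ]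
    ring_nf
  refine ⟨G, ?_, ?_⟩
  · intro v hv
    obtain ⟨G', hG', _⟩ := hder v hv
    exact hG'.differentiableAt.differentiableWithinAt
  · intro v hv
    have hyW := (hQ v.1 hv).1
    have hGJb := nekGJ_bound (hfd _ (hs21 hyW))
    have hGφb := nekGφ_bound (hfd _ (hs21 hyW))
    have hχb := hb _ (hs20 hyW)
    have h1 := hQ1 v.1 hv
    have h2 := hQ2 v.1 hv
    have hpair : (((G v).1.1, v.1.2) : CPhase d) = Q v.1 := by
      rw [← h2]
    refine ⟨?_, ?_, ?_, ?_, ?_⟩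
    · have hC : 2 * μ / e ≤ (2 / e * (1 + d * a) + 1) * μ := by
        have : 0 ≤ 2 / e * (d * a) * μ := by positivity
        calc 2 * μ / e = 2 / e * μ := by ring
          _ ≤ _ := by nlinarith
      rw [Prod.norm_def, Prod.norm_def]
      refine max_le (max_le ?_ ?_) ?_
      · have : (G v - v).1.1 = - nekGφ χ (Q v.1) := by
          simp [hG, ← h1]
        rw [this, norm_neg]; exact hGφb.trans hC
      · have : (G v - v).1.2 = nekGJ χ (Q v.1) := by
          simp [hG, h2]
        rw [this]; exact hGJb.trans hC
      · have : (G v - v).2 = ∑ i, (Q v.1).1 i * nekGJ χ (Q v.1) i - χ (Q v.1) := by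
          simp [hG]; ring
        rw [this]
        have hQa : ‖(Q v.1).1‖ ≤ a := (hs20 hyW).1.le
        calc _ ≤ ‖∑ i, (Q v.1).1 i * nekGJ χ (Q v.1) i‖ + ‖χ (Q v.1)‖ := norm_sub_le _ _
          _ ≤ d * a * (2 * μ / e) + μ := by
            gcongr
            refine (nek_dot_bound _ _).trans ?_
            gcongr
          _ ≤ _ := by
            have : 0 ≤ 2 / e * μ := by positivity
            calc _ = 2 / e * μ * (d * a) + μ := by ring
              _ ≤ _ := by nlinarith
    · obtain ⟨G', hG', hc⟩ := hder v hv
      rw [hG'.fderiv]; exact hc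
    · rw [hpair]; exact hs20 hyW
    · rw [hpair]
      have : ∀ i, (G v).1.2 i - v.1.2 i = nekGJ χ (Q v.1) i := by
        intro i; simp [hG, h2]
      simp only [this]
      simp [hG]; ring
    · intro y hy hy1 hy2
      have : y = Q v.1 := by
        apply hQu v.1 hv y hy
        ext1
        · simpa [hτ] using hy1
        · simpa [hτ] using hy2
      rw [this]

end NekPart3

section NekPart4

open Metric Set

/-- composition of the step maps -/
def nekComp {d : ℕ} (G : ℕ → NV d → NV d) : ℕ → NV d → NV d
  | 0 => id
  | k + 1 => fun v => G k (nekComp G k v)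

theorem nek_comp {d n : ℕ} {a b e C' μ2 Lh : ℝ} (hC' : 0 ≤ C') (hne : n * C' ≤ e)
    (G : ℕ → NV d → NV d) (χ : ℕ → CPhase d → ℂ) (hs : (Fin d → ℂ) → ℂ) (hLh : 0 ≤ Lh)
    (hGd : ∀ k < n, DifferentiableOn ℂ (G k) {v | v.1 ∈ nekDom d (a - 3 * e) (b - 3 * e)})
    (hG : ∀ k < n, ∀ v : NV d, v.1 ∈ nekDom d (a - 3 * e) (b - 3 * e) →
        ‖G k v - v‖ ≤ C' ∧
        (∀ w, nekθ (G k v) (fderiv ℂ (G k) v w) = nekθ v w) ∧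
        (G k v).2 - v.2 = ∑ i, (G k v).1.1 i * ((G k v).1.2 i - v.1.2 i)
          - χ k ((G k v).1.1, v.1.2))
    (hχ : ∀ k < n, ∀ x ∈ nekDom d (a - 3 * e) (b - 3 * e), ∀ J : Fin d → ℂ, ‖J‖ < a - 4 * e →
        ‖χ k x - hs J‖ ≤ μ2 + Lh * ‖x.1 - J‖) :
    ∀ k ≤ n, DifferentiableOn ℂ (nekComp G k) {v | v.1 ∈ nekDom d (a - 4 * e) (b - 4 * e)} ∧
      ∀ v : NV d, v.1 ∈ nekDom d (a - 4 * e) (b - 4 * e) →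
        ‖nekComp G k v - v‖ ≤ k * C' ∧
        (nekComp G k v).1 ∈ nekDom d (a - 3 * e) (b - 3 * e) ∧
        (∀ w, nekθ (nekComp G k v) (fderiv ℂ (nekComp G k) v w) = nekθ v w) ∧
        ‖nekθ v (nekComp G k v - v) - k * hs v.1.1‖ ≤ k * (d * (n * C') * C' + μ2 + Lh * (n * C')) := by
  have hopen : ∀ x y, IsOpen {v : NV d | v.1 ∈ nekDom d x y} := fun x y =>
    (nekDom_isOpen d x y).preimage continuous_fst
  have hclose : ∀ v u : NV d, v.1 ∈ nekDom d (a - 4 * e) (b - 4 * e) → ‖u - v‖ ≤ e →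
      u.1 ∈ nekDom d (a - 3 * e) (b - 3 * e) := by
    intro v u hv hu
    refine nekDom_closedBall (e := e) (x := v.1) ?_ ?_
    · rw [show a - 3 * e - e = a - 4 * e by ring, show b - 3 * e - e = b - 4 * e by ring]; exact hv
    · rw [mem_closedBall, dist_eq_norm]
      exact (norm_fst_le (u - v)).trans hu
  intro k
  induction k with
  | zero =>
    intro _
    refine ⟨differentiableOn_id, fun v hv => ⟨by simp [nekComp], hclose v _ hv ?_, ?_, ?_⟩⟩
    · simp only [nekComp, id, sub_self, norm_zero]
      exact le_trans (by positivity) hne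
    · intro w
      simp [nekComp]
    · simp [nekComp, nekθ]
  | succ k ih =>
    intro hk
    obtain ⟨ihd, ih⟩ := ih (by omega)
    have hkn : k < n := by omega
    have hmaps : MapsTo (nekComp G k) {v | v.1 ∈ nekDom d (a - 4 * e) (b - 4 * e)}
        {v | v.1 ∈ nekDom d (a - 3 * e) (b - 3 * e)} := fun v hv => (ih v hv).2.1
    refine ⟨(hGd k hkn).comp ihd hmaps, fun v hv => ?_⟩
    obtain ⟨i1, i2, i3, i4⟩ := ih v hv
    obtain ⟨g1, g2, g3⟩ := hG k hkn _ i2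
    set u := nekComp G k v with hu
    have hu' : nekComp G (k + 1) v = G k u := rfl
    have hkC : (k + 1 : ℝ) * C' ≤ n * C' := by
      gcongr
      exact_mod_cast hk
    have hdisp : ‖G k u - v‖ ≤ (k + 1) * C' := by
      calc ‖G k u - v‖ = ‖(G k u - u) + (u - v)‖ := by congr 1; abel
        _ ≤ C' + k * C' := (norm_add_le _ _).trans (add_le_add g1 i1)
        _ = _ := by ring
    have hmem := hclose v (G k u) hv (hdisp.trans (hkC.trans hne))
    rw [hu']
    refine ⟨by push_cast; exact hdisp, hmem, ?_, ?_⟩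
    · intro w
      have hcomp : fderiv ℂ (nekComp G (k + 1)) v w
          = fderiv ℂ (G k) u (fderiv ℂ (nekComp G k) v w) := by
        have h1 : DifferentiableAt ℂ (G k) (nekComp G k v) :=
          (hGd k hkn).differentiableAt ((hopen _ _).mem_nhds i2)
        have h2 : DifferentiableAt ℂ (nekComp G k) v :=
          ihd.differentiableAt ((hopen _ _).mem_nhds hv)
        have := fderiv_comp v h1 h2
        change fderiv ℂ (G k ∘ nekComp G k) v w = _
        rw [this]; rfl
      rw [hcomp, g2, i3]
    · have hxm : (((G k u).1.1, u.1.2) : CPhase d) ∈ nekDom d (a - 3 * e) (b - 3 * e) :=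
        ⟨hmem.1, i2.2⟩
      have hc := hχ k hkn _ hxm v.1.1 hv.1
      have hJ : ‖(G k u).1.1 - v.1.1‖ ≤ n * C' :=
        ((norm_fst_le (G k u - v).1).trans (norm_fst_le (G k u - v))).trans (hdisp.trans hkC)
      have hφ : ‖(G k u).1.2 - u.1.2‖ ≤ C' :=
        ((norm_snd_le (G k u - u).1).trans (norm_fst_le (G k u - u))).trans g1
      have key : nekθ v (G k u - v) - ((k + 1 : ℕ) : ℂ) * hs v.1.1
          = (nekθ v (u - v) - k * hs v.1.1)
            + (-(∑ i, ((G k u).1.1 - v.1.1) i * ((G k u).1.2 - u.1.2) i)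
              + (χ k ((G k u).1.1, u.1.2) - hs v.1.1)) := by
        have e1 : nekθ v (G k u - v) = nekθ v (u - v) + nekθ v (G k u - u) := by
          simp only [nekθ_sub]; ring
        have e2 : nekθ v (G k u - u) =
            -(∑ i, ((G k u).1.1 - v.1.1) i * ((G k u).1.2 - u.1.2) i)
              + χ k ((G k u).1.1, u.1.2) := by
          have : (G k u - u).2 = (G k u).2 - u.2 := rfl
          rw [nekθ, this, g3, ← Finset.sum_neg_distrib, ← sub_add, ← Finset.sum_sub_distrib]
          congr 1
          apply Finset.sum_congr rfl
          intro i _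
          simp
          ring
        rw [e1, e2]; push_cast; ring
      rw [key]
      refine (norm_add_le _ _).trans ?_
      have hb : ‖-(∑ i, ((G k u).1.1 - v.1.1) i * ((G k u).1.2 - u.1.2) i)
              + (χ k ((G k u).1.1, u.1.2) - hs v.1.1)‖ ≤ d * (n * C') * C' + (μ2 + Lh * (n * C')) := by
        refine (norm_add_le _ _).trans (add_le_add ?_ (hc.trans ?_))
        · rw [norm_neg]
          refine (nek_dot_bound _ _).trans ?_
          gcongr
        · gcongr
      push_cast
      nlinarith [add_le_add i4 hb]

end NekPart4

section NekPart5

open Metric Set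

/-- complexification of a multilinear form -/
noncomputable def nekQ {d : ℕ} (p : FormalMultilinearSeries ℝ (Fin d → ℝ) ℝ) :
    FormalMultilinearSeries ℂ (Fin d → ℂ) ℂ := fun n =>
  ∑ f : Fin n → Fin d, ((p n (fun j => Pi.single (f j) 1) : ℝ) : ℂ) •
    (ContinuousMultilinearMap.mkPiAlgebra ℂ (Fin n) ℂ).compContinuousLinearMap
      (fun j => (ContinuousLinearMap.proj (f j) : (Fin d → ℂ) →L[ℂ] ℂ))

theorem nekQ_apply {d : ℕ} (p : FormalMultilinearSeries ℝ (Fin d → ℝ) ℝ) (n : ℕ)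
    (m : Fin n → Fin d → ℂ) :
    nekQ p n m = ∑ f : Fin n → Fin d, ((p n (fun j => Pi.single (f j) 1) : ℝ) : ℂ) *
      ∏ j, m j (f j) := by
  simp [nekQ]

theorem nekQ_real {d : ℕ} (p : FormalMultilinearSeries ℝ (Fin d → ℝ) ℝ) (n : ℕ)
    (y : Fin d → ℝ) : nekQ p n (fun _ => cx d y) = ((p n (fun _ => y) : ℝ) : ℂ) := by
  rw [nekQ_apply]
  have h1 : (fun _ : Fin n => y) = fun _ => ∑ i, y i • (Pi.single i 1 : Fin d → ℝ) := by
    funext j i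
    simp [Finset.sum_apply, Pi.single_apply]
  conv_rhs => rw [h1, ContinuousMultilinearMap.map_sum]
  rw [Complex.ofReal_sum]
  apply Finset.sum_congr rfl
  intro f _
  rw [ContinuousMultilinearMap.map_smul_univ]
  simp [cx, mul_comm]

theorem nekQ_norm {d : ℕ} (p : FormalMultilinearSeries ℝ (Fin d → ℝ) ℝ) (n : ℕ) :
    ‖nekQ p n‖ ≤ (d : ℝ) ^ n * ‖p n‖ := by
  refine ContinuousMultilinearMap.opNorm_le_bound (by positivity) fun m => ?_
  rw [nekQ_apply]
  calc ‖_‖ ≤ ∑ f : Fin n → Fin d, ‖p n‖ * ∏ j, ‖m j‖ := by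
        apply norm_sum_le_of_le
        intro f _
        rw [norm_mul, norm_prod, Complex.norm_real]
        gcongr
        · refine ((p n).le_opNorm _).trans ?_
          refine mul_le_of_le_one_right (norm_nonneg _) (Finset.prod_le_one (fun _ _ => norm_nonneg _) ?_)
          intro j _
          rw [pi_norm_le_iff_of_nonneg zero_le_one]
          intro i
          by_cases h : i = f j
          · subst h; simp
          · simp [h]
        · exact norm_le_pi_norm _ _
    _ = _ := by simp [Fintype.card_pi, mul_assoc]

theorem cx_sub' {d : ℕ} (x y : Fin d → ℝ) : cx d (x - y) = cx d x - cx d y := by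
  funext i; simp [cx]

theorem cx_add' {d : ℕ} (x y : Fin d → ℝ) : cx d (x + y) = cx d x + cx d y := by
  funext i; simp [cx]

theorem cx_norm {d : ℕ} (x : Fin d → ℝ) : ‖cx d x‖ = ‖x‖ := by
  simp [Pi.norm_def, cx]

theorem cx_dist {d : ℕ} (x y : Fin d → ℝ) : dist (cx d x) (cx d y) = dist x y := by
  rw [dist_eq_norm, dist_eq_norm, ← cx_sub', cx_norm]

open scoped ENNReal NNReal in
theorem nek_complexify {d : ℕ} (hd : 1 ≤ d) {h : (Fin d → ℝ) → ℝ} {c : Fin d → ℝ}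
    (hh : AnalyticAt ℝ h c) :
    ∃ l > 0, ∃ Hc : (Fin d → ℂ) → ℂ, AnalyticOnNhd ℂ Hc (ball (cx d c) l) ∧
      ∀ x ∈ ball c l, Hc (cx d x) = h x := by
  obtain ⟨p, ρ, hp⟩ := hh
  obtain ⟨R, hR0, hRρ⟩ := ENNReal.lt_iff_exists_nnreal_btwn.1 hp.r_pos
  have hR : 0 < R := by exact_mod_cast hR0
  obtain ⟨C, hC, hpC⟩ := p.norm_mul_pow_le_of_lt_radius (lt_of_lt_of_le hRρ hp.r_le)
  have hd0 : (0 : ℝ) < d := by exact_mod_cast hd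
  have hd0' : (0 : ℝ≥0) < d := by exact_mod_cast hd
  have hrad : ((R / d : ℝ≥0) : ℝ≥0∞) ≤ (nekQ p).radius := by
    refine (nekQ p).le_radius_of_bound C fun n => ?_
    refine le_trans ?_ (hpC n)
    calc ‖nekQ p n‖ * ((R / d : ℝ≥0) : ℝ) ^ n
        ≤ ((d : ℝ) ^ n * ‖p n‖) * ((R : ℝ) / d) ^ n := by
          push_cast
          gcongr
          exact nekQ_norm p n
      _ = ‖p n‖ * (R : ℝ) ^ n := by
          rw [div_pow]; field_simp
  have hpos : 0 < (R / d : ℝ≥0) := by positivity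
  have hq := ((nekQ p).hasFPowerSeriesOnBall
    (lt_of_lt_of_le (by exact_mod_cast hpos) hrad)).comp_sub (cx d c)
  rw [zero_add] at hq
  refine ⟨(R / d : ℝ≥0), by exact_mod_cast hpos, fun z => (nekQ p).sum (z - cx d c), ?_, ?_⟩
  · intro z hz
    refine hq.analyticOnNhd z ?_
    rw [Metric.mem_eball]
    rw [mem_ball] at hz
    refine lt_of_lt_of_le ?_ hrad
    rw [edist_lt_coe]
    exact hz
  · intro x hx
    have hx1 : x - c ∈ eball 0 ρ := by
      rw [Metric.mem_eball, edist_zero_right]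
      refine lt_trans ?_ hRρ
      rw [mem_ball, dist_eq_norm] at hx
      have : ‖x - c‖ < R := hx.trans_le (by
        push_cast
        exact div_le_self R.2 (by exact_mod_cast hd))
      rw [enorm_eq_nnnorm]
      exact_mod_cast this
    have hs := hp.hasSum hx1
    have hs2 := (Complex.hasSum_ofReal (L := .unconditional _)).2 hs
    have : ((nekQ p).sum (cx d x - cx d c)) = ((h (c + (x - c)) : ℝ) : ℂ) := by
      rw [FormalMultilinearSeries.sum]
      simp only [← cx_sub', nekQ_real]
      exact hs2.tsum_eq
    simp only [this]
    simp

end NekPart5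

section NekPart6

open Metric Set

theorem nek_uniform {d : ℕ} (hd : 1 ≤ d) {h : (Fin d → ℝ) → ℝ} {K : Set (Fin d → ℝ)}
    (hK : IsCompact K) (hh : AnalyticOnNhd ℝ h K) :
    ∃ l > 0, ∃ M : ℝ, ∀ I ∈ K, ∃ Hc : (Fin d → ℂ) → ℂ, AnalyticOnNhd ℂ Hc (ball (cx d I) l) ∧
      (∀ z ∈ ball (cx d I) l, ‖Hc z‖ ≤ M) ∧ ∀ x ∈ ball I l, Hc (cx d x) = h x := by
  refine hK.induction_on (p := fun S => ∃ l > 0, ∃ M : ℝ, ∀ I ∈ S, ∃ Hc : (Fin d → ℂ) → ℂ,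
      AnalyticOnNhd ℂ Hc (ball (cx d I) l) ∧
      (∀ z ∈ ball (cx d I) l, ‖Hc z‖ ≤ M) ∧ ∀ x ∈ ball I l, Hc (cx d x) = h x) ?_ ?_ ?_ ?_
  · exact ⟨1, one_pos, 0, fun I hI => absurd hI (notMem_empty I)⟩
  · rintro S T hST ⟨l, hl, M, hM⟩
    exact ⟨l, hl, M, fun I hI => hM I (hST hI)⟩
  · rintro S T ⟨l, hl, M, hM⟩ ⟨l', hl', M', hM'⟩
    refine ⟨min l l', lt_min hl hl', max M M', fun I hI => ?_⟩
    rcases hI with hI | hI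
    · obtain ⟨Hc, h1, h2, h3⟩ := hM I hI
      exact ⟨Hc, h1.mono (ball_subset_ball (min_le_left _ _)),
        fun z hz => (h2 z (ball_subset_ball (min_le_left _ _) hz)).trans (le_max_left _ _),
        fun x hx => h3 x (ball_subset_ball (min_le_left _ _) hx)⟩
    · obtain ⟨Hc, h1, h2, h3⟩ := hM' I hI
      exact ⟨Hc, h1.mono (ball_subset_ball (min_le_right _ _)),
        fun z hz => (h2 z (ball_subset_ball (min_le_right _ _) hz)).trans (le_max_right _ _),
        fun x hx => h3 x (ball_subset_ball (min_le_right _ _) hx)⟩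
  · intro c hc
    obtain ⟨l, hl, Hc, h1, h3⟩ := nek_complexify hd (hh c hc)
    have hcont : ContinuousAt Hc (cx d c) := (h1 _ (mem_ball_self hl)).continuousAt
    obtain ⟨l', hl', hb⟩ := Metric.continuousAt_iff.1 hcont 1 one_pos
    have hm : 0 < min l l' / 2 := by have := lt_min hl hl'; linarith
    refine ⟨ball c (min l l' / 2), mem_nhdsWithin_of_mem_nhds (ball_mem_nhds _ hm),
      min l l' / 2, hm, ‖Hc (cx d c)‖ + 1, fun I hI => ⟨Hc, ?_, ?_, ?_⟩⟩
    · refine h1.mono (ball_subset_ball' ?_)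
      rw [cx_dist]; rw [mem_ball] at hI
      linarith [min_le_left l l']
    · intro z hz
      have : dist z (cx d c) < l' := by
        rw [mem_ball] at hI hz
        have := dist_triangle z (cx d I) (cx d c)
        rw [cx_dist] at this
        linarith [min_le_right l l']
      have := hb this
      rw [dist_eq_norm] at this
      have := norm_sub_norm_le (Hc z) (Hc (cx d c))
      linarith
    · intro x hx
      refine h3 x ?_
      rw [mem_ball] at *
      linarith [dist_triangle x I c, min_le_left l l']

/-- real-linear embedding -/
noncomputable def cxL (d : ℕ) : (Fin d → ℝ) →L[ℝ] (Fin d → ℂ) :=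
  ContinuousLinearMap.pi (fun i => Complex.ofRealCLM.comp (ContinuousLinearMap.proj i))

theorem cxL_apply {d : ℕ} (x : Fin d → ℝ) : cxL d x = cx d x := by
  funext i; simp [cxL, cx]

theorem nek_grad {d : ℕ} {h : (Fin d → ℝ) → ℝ} {Hc : (Fin d → ℂ) → ℂ} {x w : Fin d → ℝ}
    (hH : DifferentiableAt ℂ Hc (cx d x))
    (heq : ∀ᶠ y in nhds x, Hc (cx d y) = h y)
    (hw : HasFDerivAt h (∑ i, w i • (ContinuousLinearMap.proj i : (Fin d → ℝ) →L[ℝ] ℝ)) x)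
    (i : Fin d) : fderiv ℂ Hc (cx d x) (Pi.single i 1) = w i := by
  have h1 : HasFDerivAt (fun y => Hc (cx d y))
      (((fderiv ℂ Hc (cx d x)).restrictScalars ℝ).comp (cxL d)) x := by
    have h0 := hH.hasFDerivAt.restrictScalars ℝ
    have h2 : HasFDerivAt (fun y => cx d y) (cxL d) x := by
      have := (cxL d).hasFDerivAt (x := x)
      simpa [funext cxL_apply] using this
    exact h0.comp x h2
  have h2 : HasFDerivAt (fun y => ((h y : ℝ) : ℂ))
      (Complex.ofRealCLM.comp (∑ i, w i • (ContinuousLinearMap.proj i : (Fin d → ℝ) →L[ℝ] ℝ))) x :=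
    Complex.ofRealCLM.hasFDerivAt.comp x hw
  have h3 := h2.congr_of_eventuallyEq heq
  have h4 := congrArg (fun L => L (Pi.single i 1)) (h1.unique h3)
  simp only [ContinuousLinearMap.comp_apply, ContinuousLinearMap.coe_restrictScalars', cxL_apply] at h4
  have h5 : cx d (Pi.single i 1) = Pi.single i 1 := by
    funext j
    by_cases hj : j = i
    · subst hj; simp [cx]
    · simp [cx, hj]
  rw [h5] at h4
  rw [h4]
  simp [Pi.single_apply]

theorem nek_lin_decomp {d : ℕ} (L : (Fin d → ℂ) →L[ℂ] ℂ) (w : Fin d → ℂ) :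
    L w = ∑ i, L (Pi.single i 1) * w i := by
  have h1 : w = ∑ i, w i • (Pi.single i 1 : Fin d → ℂ) := by
    funext j
    simp [Finset.sum_apply, Pi.single_apply]
  conv_lhs => rw [h1]
  rw [map_sum]
  apply Finset.sum_congr rfl
  intro i _
  rw [map_smul, smul_eq_mul]; ring

theorem nek_package {d : ℕ} (hd : 1 ≤ d) {h : (Fin d → ℝ) → ℝ} {K U : Set (Fin d → ℝ)} {σ : ℝ}
    (hσ : 0 < σ) (hU : ∀ I ∈ K, ball I σ ⊆ U)
    (hK : IsCompact K) (hh : AnalyticOnNhd ℝ h U) {ω : (Fin d → ℝ) → Fin d → ℝ}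
    (hω : ∀ I ∈ U, HasFDerivAt h
      (∑ i, ω I i • (ContinuousLinearMap.proj i : (Fin d → ℝ) →L[ℝ] ℝ)) I) :
    ∃ l > 0, l ≤ σ ∧ ∃ Λ > 0, ∀ I ∈ K, ∃ Hc : (Fin d → ℂ) → ℂ,
      AnalyticOnNhd ℂ Hc (ball (cx d I) l) ∧
      (∀ x ∈ ball I l, Hc (cx d x) = h x) ∧
      (∀ x ∈ ball I l, ∀ i, fderiv ℂ Hc (cx d x) (Pi.single i 1) = ω x i) ∧
      (∀ z : Fin d → ℂ, ‖z‖ < l →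
        ‖Hc (cx d I + z) - h I - ∑ i, (ω I i : ℂ) * z i‖ ≤ Λ * ‖z‖ ^ 2) := by
  obtain ⟨l₁, hl₁, M, hM⟩ := nek_uniform hd hK (hh.mono fun I hI => hU I hI (mem_ball_self hσ))
  set l := min l₁ σ with hl
  have hl0 : 0 < l := lt_min hl₁ hσ
  refine ⟨l, hl0, min_le_right _ _, (2 + 2 * d) * (|M| + 1) / l ^ 2, by positivity, fun I hI => ?_⟩
  obtain ⟨Hc, h1, h2, h3⟩ := hM I hI
  have hsub : ball I l ⊆ ball I l₁ := ball_subset_ball (min_le_left _ _)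
  have hsub' : ball (cx d I) l ⊆ ball (cx d I) l₁ := ball_subset_ball (min_le_left _ _)
  have hg : ∀ x ∈ ball I l, ∀ i, fderiv ℂ Hc (cx d x) (Pi.single i 1) = ω x i := by
    intro x hx i
    refine nek_grad (h := h) (h1 _ (hsub' ?_)).differentiableAt ?_ (hω x ?_) i
    · rw [mem_ball, cx_dist]; exact hx
    · filter_upwards [isOpen_ball.mem_nhds (hsub hx)] with y hy using h3 y hy
    · exact hU I hI (ball_subset_ball (min_le_right _ _) hx)
  refine ⟨Hc, h1.mono hsub', fun x hx => h3 x (hsub hx), hg, fun z hz => ?_⟩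
  have hI0 : I ∈ ball I l := mem_ball_self hl0
  have hM1 : ∀ z ∈ ball (cx d I) l, ‖Hc z‖ ≤ |M| + 1 := fun z hz =>
    (h2 z (hsub' hz)).trans (by linarith [le_abs_self M])
  have hdH : DifferentiableOn ℂ Hc (ball (cx d I) l) := (h1.mono hsub').differentiableOn
  set L := fderiv ℂ Hc (cx d I) with hL
  have hLn : ‖L‖ ≤ 2 * (|M| + 1) / l := nek_cauchy_fderiv hl0 hdH hM1
  have hLz : ∀ z, L z = ∑ i, (ω I i : ℂ) * z i := by
    intro z
    rw [nek_lin_decomp]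
    simp only [hL, hg I hI0]
  have hωb : ∀ z : Fin d → ℂ, ‖L z‖ ≤ 2 * (|M| + 1) / l * ‖z‖ := fun z => L.le_of_opNorm_le hLn z
  set f : (Fin d → ℂ) → ℂ := fun z => Hc z - L z with hf
  have hlo : (fun w => f w - f (cx d I)) =o[nhds (cx d I)] fun w => ‖w - cx d I‖ ^ 1 := by
    have h := (h1.mono hsub' _ (mem_ball_self hl0)).differentiableAt.hasFDerivAt.isLittleO
    simp only [pow_one]
    refine (h.norm_right).congr_left fun w => ?_
    simp only [hf, hL, map_sub]; ring
  have hmaps : MapsTo f (ball (cx d I) l)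
      (closedBall (f (cx d I)) ((2 + 2 * d) * (|M| + 1))) := by
    intro w hw
    rw [mem_closedBall, dist_eq_norm]
    have e1 : f w - f (cx d I) = (Hc w - Hc (cx d I)) - L (w - cx d I) := by
      simp only [hf, map_sub]; ring
    rw [e1]
    have hwn : ‖w - cx d I‖ < l := by rwa [mem_ball, dist_eq_norm] at hw
    have e2 : ‖L (w - cx d I)‖ ≤ 2 * (|M| + 1) := by
      refine (hωb _).trans ?_
      calc 2 * (|M| + 1) / l * ‖w - cx d I‖ ≤ 2 * (|M| + 1) / l * l := by gcongr
        _ = _ := by field_simp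
    have hd1 : (1 : ℝ) ≤ d := by exact_mod_cast hd
    have := norm_sub_le (Hc w - Hc (cx d I)) (L (w - cx d I))
    have := norm_sub_le (Hc w) (Hc (cx d I))
    have := hM1 w hw
    have := hM1 _ (mem_ball_self (x := cx d I) hl0)
    nlinarith [abs_nonneg M]
  have hdf : DifferentiableOn ℂ f (ball (cx d I) l) := hdH.sub L.differentiable.differentiableOn
  have hzm : cx d I + z ∈ ball (cx d I) l := by simpa [mem_ball, dist_eq_norm] using hz
  have := Complex.dist_le_mul_div_pow_of_mapsTo_ball_of_isLittleO hdf hmaps hlo hzm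
  rw [dist_eq_norm, dist_eq_norm, add_sub_cancel_left] at this
  have e1 : Hc (cx d I + z) - h I - ∑ i, (ω I i : ℂ) * z i = f (cx d I + z) - f (cx d I) := by
    simp only [hf, map_add]
    rw [← hLz, ← h3 I (hsub hI0)]; ring
  rw [e1]
  refine this.trans (le_of_eq ?_)
  norm_num
  rw [div_pow]; ring

end NekPart6

section NekPart7

open Metric Set

theorem nek_mono01 {g g' : ℝ → ℝ} (hg : ∀ t ∈ Icc (0 : ℝ) 1, HasDerivAt g (g' t) t)
    (hg' : ∀ t ∈ Icc (0 : ℝ) 1, 0 ≤ g' t) : ∀ t ∈ Icc (0 : ℝ) 1, g 0 ≤ g t := by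
  have hm : MonotoneOn g (Icc 0 1) := by
    refine monotoneOn_of_deriv_nonneg (convex_Icc 0 1)
      (fun t ht => (hg t ht).continuousAt.continuousWithinAt)
      (fun t ht => (hg t (interior_subset ht)).differentiableAt.differentiableWithinAt) ?_
    intro t ht
    rw [(hg t (interior_subset ht)).deriv]
    exact hg' t (interior_subset ht)
  intro t ht
  exact hm ⟨le_rfl, zero_le_one⟩ ht ht.1

theorem nek_convex {d : ℕ} (hd : 1 ≤ d) {ν σ : ℝ} (hν : 0 < ν)
    {h : (Fin d → ℝ) → ℝ} {U : Set (Fin d → ℝ)} {I v : Fin d → ℝ}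
    (hU : closedBall I σ ⊆ U) (hv : ‖v‖ ≤ σ) {ω : (Fin d → ℝ) → Fin d → ℝ}
    (hω : ∀ I ∈ U, HasFDerivAt h
      (∑ i, ω I i • (ContinuousLinearMap.proj i : (Fin d → ℝ) →L[ℝ] ℝ)) I)
    (hconvex : ∀ I ∈ U, ∀ v : Fin d → ℝ,
      ν * ∑ i, v i ^ 2 ≤ ∑ i, fderiv ℝ ω I v i * v i) :
    ν / 2 * ∑ i, v i ^ 2 ≤ h (I + v) - h I - ∑ i, ω I i * v i := by
  have hdiff : ∀ x ∈ U, DifferentiableAt ℝ ω x := by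
    intro x hx
    by_contra hnd
    have := hconvex x hx (fun _ => 1)
    rw [fderiv_zero_of_not_differentiableAt hnd] at this
    have hd0 : (0 : ℝ) < d := by exact_mod_cast hd
    simp at this
    nlinarith [mul_pos hν hd0]
  have hmem : ∀ t ∈ Icc (0 : ℝ) 1, I + t • v ∈ U := by
    intro t ht
    apply hU
    rw [mem_closedBall, dist_eq_norm, add_sub_cancel_left, norm_smul, Real.norm_eq_abs,
      abs_of_nonneg ht.1]
    nlinarith [ht.2, norm_nonneg v]
  have hline : ∀ t : ℝ, HasDerivAt (fun t : ℝ => I + t • v) v t := by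
    intro t
    simpa using ((hasDerivAt_id t).smul_const v).const_add I
  set S := ∑ i, v i ^ 2 with hS
  set k : ℝ → ℝ := fun t => ∑ i, (ω (I + t • v) i - ω I i) * v i - ν * t * S with hk
  have hkd : ∀ t ∈ Icc (0 : ℝ) 1, HasDerivAt k
      (∑ i, fderiv ℝ ω (I + t • v) v i * v i - ν * S) t := by
    intro t ht
    have h1 : HasDerivAt (fun t : ℝ => ω (I + t • v)) (fderiv ℝ ω (I + t • v) v) t :=
      (hdiff _ (hmem t ht)).hasFDerivAt.comp_hasDerivAt t (hline t)
    have h2 := hasDerivAt_pi.1 h1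
    have h3 : HasDerivAt (fun t : ℝ => ∑ i, (ω (I + t • v) i - ω I i) * v i)
        (∑ i, fderiv ℝ ω (I + t • v) v i * v i) t :=
      HasDerivAt.fun_sum fun i _ => ((h2 i).sub_const _).mul_const _
    have h4 : HasDerivAt (fun t : ℝ => ν * t * S) (ν * S) t := by
      simpa using ((hasDerivAt_id t).const_mul ν).mul_const S
    exact h3.sub h4
  have hk0 : ∀ t ∈ Icc (0 : ℝ) 1, 0 ≤ k t := by
    intro t ht
    have := nek_mono01 hkd (fun t ht => by linarith [hconvex _ (hmem t ht) v]) t ht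
    have h0 : k 0 = 0 := by simp [hk]
    linarith
  set g : ℝ → ℝ := fun t => h (I + t • v) - t * ∑ i, ω I i * v i - ν / 2 * t ^ 2 * S with hg
  have hgd : ∀ t ∈ Icc (0 : ℝ) 1, HasDerivAt g (k t) t := by
    intro t ht
    have h1 : HasDerivAt (fun t : ℝ => h (I + t • v)) (∑ i, ω (I + t • v) i * v i) t := by
      have := (hω _ (hmem t ht)).comp_hasDerivAt t (hline t)
      have e : (∑ i, ω (I + t • v) i • (ContinuousLinearMap.proj i : (Fin d → ℝ) →L[ℝ] ℝ)) v
          = ∑ i, ω (I + t • v) i * v i := by simp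
      rw [← e]
      exact this
    have h2 : HasDerivAt (fun t : ℝ => t * ∑ i, ω I i * v i) (∑ i, ω I i * v i) t := by
      simpa using (hasDerivAt_id t).mul_const (∑ i, ω I i * v i)
    have h4 : HasDerivAt (fun t : ℝ => ν / 2 * t ^ 2 * S) (ν * t * S) t := by
      have h5 := (((hasDerivAt_id t).pow 2).const_mul (ν / 2)).mul_const S
      have e : ν / 2 * (((2 : ℕ) : ℝ) * id t ^ (2 - 1) * 1) * S = ν * t * S := by
        norm_num [id]; left; ring
      rw [← e]
      exact h5
    have e : k t = (∑ i, ω (I + t • v) i * v i) - (∑ i, ω I i * v i) - ν * t * S := by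
      simp only [hk, sub_mul, Finset.sum_sub_distrib]
    rw [e]
    exact (h1.sub h2).sub h4
  have := nek_mono01 hgd hk0 1 ⟨zero_le_one, le_rfl⟩
  simp only [hg, one_smul, zero_smul, add_zero] at this
  linarith

end NekPart7

section NekPart8

open Metric Set

/-- scaling map -/
noncomputable def nekA {d : ℕ} (I w : Fin d → ℝ) (ρ : ℝ) (k : ℕ) (x : CPhase d) : CPhase d :=
  (cx d I + (ρ : ℂ) • x.1, x.2 + cx d ((k : ℝ) • w))

/-- scaled generating function -/
noncomputable def nekHs {d : ℕ} (Hc : (Fin d → ℂ) → ℂ) (hI : ℝ) (I w : Fin d → ℝ) (ρ : ℝ)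
    (J : Fin d → ℂ) : ℂ :=
  (Hc (cx d I + (ρ : ℂ) • J) - hI - ∑ i, (w i : ℂ) * ((ρ : ℂ) • J) i) / ρ

/-- scaled generating function -/
noncomputable def nekχ {d : ℕ} (Hc : (Fin d → ℂ) → ℂ) (s : CPhase d → ℂ) (hI ε : ℝ)
    (I w : Fin d → ℝ) (ρ : ℝ) (k : ℕ) (x : CPhase d) : ℂ :=
  nekHs Hc hI I w ρ x.1 + (ε / ρ : ℝ) * s (nekA I w ρ k x)

theorem nekA_hasFDerivAt {d : ℕ} (I w : Fin d → ℝ) (ρ : ℝ) (k : ℕ) (x : CPhase d) :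
    HasFDerivAt (nekA I w ρ k) (((ρ : ℂ) • ContinuousLinearMap.fst ℂ (Fin d → ℂ) (Fin d → ℂ)).prod
      (ContinuousLinearMap.snd ℂ (Fin d → ℂ) (Fin d → ℂ))) x := by
  unfold nekA
  refine HasFDerivAt.prodMk ?_ ?_
  · exact (hasFDerivAt_fst.const_smul (ρ : ℂ)).const_add _
  · exact hasFDerivAt_snd.add_const _

theorem nekA_analytic {d : ℕ} (I w : Fin d → ℝ) (ρ : ℝ) (k : ℕ) (x : CPhase d) :
    AnalyticAt ℂ (nekA I w ρ k) x := by
  unfold nekA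
  refine AnalyticAt.prod ?_ ?_
  · exact analyticAt_const.fun_add (analyticAt_const.fun_smul analyticAt_fst)
  · exact analyticAt_snd.add analyticAt_const

theorem nekHs_analytic {d : ℕ} {Hc : (Fin d → ℂ) → ℂ} (hI : ℝ) {I w : Fin d → ℝ} {ρ : ℝ}
    {J : Fin d → ℂ} (hH : AnalyticAt ℂ Hc (cx d I + (ρ : ℂ) • J)) :
    AnalyticAt ℂ (nekHs Hc hI I w ρ) J := by
  unfold nekHs
  refine AnalyticAt.div_const ?_
  refine AnalyticAt.sub (AnalyticAt.sub ?_ analyticAt_const) ?_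
  · exact AnalyticAt.fun_comp (f := fun J => cx d I + (ρ : ℂ) • J) hH
      (analyticAt_const.fun_add (analyticAt_const.fun_smul analyticAt_id))
  · have : (fun J : Fin d → ℂ => ∑ i, (w i : ℂ) * ((ρ : ℂ) • J) i) =
        fun J => (∑ i, (w i * ρ : ℂ) • (ContinuousLinearMap.proj i : (Fin d → ℂ) →L[ℂ] ℂ)) J := by
      funext J
      simp [mul_assoc]
    rw [this]
    exact ContinuousLinearMap.analyticAt _ _

theorem nekHs_bound {d : ℕ} {Hc : (Fin d → ℂ) → ℂ} {hI : ℝ} {I w : Fin d → ℝ} {ρ l Λ : ℝ}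
    (hρ : 0 < ρ)
    (hq : ∀ z : Fin d → ℂ, ‖z‖ < l →
        ‖Hc (cx d I + z) - hI - ∑ i, (w i : ℂ) * z i‖ ≤ Λ * ‖z‖ ^ 2)
    {J : Fin d → ℂ} (hJ : ρ * ‖J‖ < l) : ‖nekHs Hc hI I w ρ J‖ ≤ Λ * ρ * ‖J‖ ^ 2 := by
  have hn : ‖(ρ : ℂ) • J‖ = ρ * ‖J‖ := by
    rw [norm_smul, Complex.norm_real, Real.norm_eq_abs, abs_of_pos hρ]
  have := hq ((ρ : ℂ) • J) (by rw [hn]; exact hJ)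
  rw [nekHs, norm_div, Complex.norm_real, Real.norm_eq_abs, abs_of_pos hρ, div_le_iff₀ hρ]
  refine this.trans (le_of_eq ?_)
  rw [hn]; ring

theorem nekχ_GJ {d : ℕ} {Hc : (Fin d → ℂ) → ℂ} {s : CPhase d → ℂ} {hI ε : ℝ}
    {I w : Fin d → ℝ} {ρ : ℝ} (hρ : 0 < ρ) {k : ℕ} {x : CPhase d}
    (hH : DifferentiableAt ℂ Hc (cx d I + (ρ : ℂ) • x.1))
    (hs : DifferentiableAt ℂ s (nekA I w ρ k x)) (i : Fin d) :
    nekGJ (nekχ Hc s hI ε I w ρ k) x i =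
      fderiv ℂ Hc (cx d I + (ρ : ℂ) • x.1) (Pi.single i 1) - w i
        + ε * fderiv ℂ s (nekA I w ρ k x) (Pi.single i 1, 0) ∧
    nekGφ (nekχ Hc s hI ε I w ρ k) x i =
      (ε / ρ : ℝ) * fderiv ℂ s (nekA I w ρ k x) (0, Pi.single i 1) := by
  have hA := nekA_hasFDerivAt I w ρ k x
  have h1 := hs.hasFDerivAt.comp x hA
  have h2 : HasFDerivAt (fun y : CPhase d => cx d I + (ρ : ℂ) • y.1)
      ((ρ : ℂ) • ContinuousLinearMap.fst ℂ (Fin d → ℂ) (Fin d → ℂ)) x :=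
    (hasFDerivAt_fst.const_smul (ρ : ℂ)).const_add _
  have h3 := hH.hasFDerivAt.comp x h2
  set P : CPhase d →L[ℂ] ℂ := ∑ i, (w i * ρ : ℂ) •
    ((ContinuousLinearMap.proj i : (Fin d → ℂ) →L[ℂ] ℂ).comp
      (ContinuousLinearMap.fst ℂ (Fin d → ℂ) (Fin d → ℂ))) with hP
  have h4 : HasFDerivAt (fun y : CPhase d => ∑ i, (w i : ℂ) * ((ρ : ℂ) • y.1) i) P x := by
    have : (fun y : CPhase d => ∑ i, (w i : ℂ) * ((ρ : ℂ) • y.1) i) = P := by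
      funext y
      simp [hP, mul_assoc]
    rw [this]
    exact P.hasFDerivAt
  have hρc : (ρ : ℂ) ≠ 0 := by exact_mod_cast hρ.ne'
  have h5 : HasFDerivAt (nekχ Hc s hI ε I w ρ k) ((ρ : ℂ)⁻¹ •
      ((fderiv ℂ Hc (cx d I + (ρ : ℂ) • x.1)).comp
        ((ρ : ℂ) • ContinuousLinearMap.fst ℂ (Fin d → ℂ) (Fin d → ℂ)) - P) +
      ((ε / ρ : ℝ) : ℂ) • (fderiv ℂ s (nekA I w ρ k x)).comp
        (((ρ : ℂ) • ContinuousLinearMap.fst ℂ (Fin d → ℂ) (Fin d → ℂ)).prod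
      (ContinuousLinearMap.snd ℂ (Fin d → ℂ) (Fin d → ℂ)))) x := by
    refine HasFDerivAt.fun_add ?_ (h1.const_smul ((ε / ρ : ℝ) : ℂ))
    have h6 := ((h3.sub_const (hI : ℂ)).sub h4).const_smul ((ρ : ℂ)⁻¹)
    refine h6.congr_of_eventuallyEq (Filter.Eventually.of_forall fun y => ?_)
    simp [nekHs, div_eq_inv_mul]
  have hP1 : P (Pi.single i 1, 0) = w i * ρ := by
    simp [hP, Pi.single_apply]
  have hP2 : P (0, Pi.single i 1) = 0 := by
    simp [hP]
  constructor
  · rw [nekGJ, h5.fderiv]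
    have e1 : ((ρ : ℂ) • (Pi.single i 1 : Fin d → ℂ), (0 : Fin d → ℂ))
        = (ρ : ℂ) • ((Pi.single i 1, 0) : CPhase d) := by simp
    simp only [add_apply, smul_apply, sub_apply, ContinuousLinearMap.comp_apply,
      ContinuousLinearMap.prod_apply, ContinuousLinearMap.coe_fst', ContinuousLinearMap.coe_snd',
      hP1, e1, map_smul, smul_eq_mul]
    push_cast
    field_simp
  · rw [nekGφ, h5.fderiv]
    simp [hP2]

end NekPart8

section NekPart9

open Metric Set

/-- scaled real point -/
noncomputable def nekE {d : ℕ} (I w : Fin d → ℝ) (ρ : ℝ) (k : ℕ) (x : RPhase d) : CPhase d :=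
  (cx d (ρ⁻¹ • (x.1 - I)), cx d (x.2 - (k : ℝ) • w))

theorem nekA_mem {d : ℕ} {I w : Fin d → ℝ} {ρ σ r : ℝ} {k : ℕ} {DF : Set (CPhase d)} (hρ : 0 < ρ)
    (hDF : ∀ z : CPhase d, dist z.1 (cx d I) ≤ σ → (∀ i, |(z.2 i).im| ≤ r) → z ∈ DF)
    (h3 : 3 * ρ ≤ σ) {x : CPhase d} (hx : x ∈ nekDom d 3 r) : nekA I w ρ k x ∈ DF := by
  refine hDF _ ?_ ?_
  · rw [nekA, dist_eq_norm]
    simp only [add_sub_cancel_left]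
    rw [norm_smul, Complex.norm_real, Real.norm_eq_abs, abs_of_pos hρ]
    nlinarith [hx.1]
  · intro i
    have := (hx.2 i).le
    simpa [nekA, cx] using this

theorem nekχ_props {d : ℕ} {Hc : (Fin d → ℂ) → ℂ} {s : CPhase d → ℂ} {hI ε : ℝ}
    {I w : Fin d → ℝ} {ρ σ r l Λ Ms e : ℝ} (hρ : 0 < ρ) {DF : Set (CPhase d)}
    (hDF : ∀ z : CPhase d, dist z.1 (cx d I) ≤ σ → (∀ i, |(z.2 i).im| ≤ r) → z ∈ DF)
    (h3 : 3 * ρ ≤ σ) (h3l : 3 * ρ ≤ l) (hε : 0 ≤ ε) (hερ : ε ≤ ρ ^ 2) (he : 0 < e)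
    (hH : AnalyticOnNhd ℂ Hc (ball (cx d I) l)) (hΛ : 0 < Λ)
    (hq : ∀ z : Fin d → ℂ, ‖z‖ < l →
        ‖Hc (cx d I + z) - hI - ∑ i, (w i : ℂ) * z i‖ ≤ Λ * ‖z‖ ^ 2)
    (hs : AnalyticOnNhd ℂ s DF) (hMs : 0 ≤ Ms) (hsb : ∀ z ∈ DF, ‖s z‖ ≤ Ms) (k : ℕ) :
    AnalyticOnNhd ℂ (nekχ Hc s hI ε I w ρ k) (nekDom d 3 r) ∧
    (∀ x ∈ nekDom d 3 r, ‖nekχ Hc s hI ε I w ρ k x‖ ≤ (9 * Λ + Ms) * ρ) ∧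
    (∀ x ∈ nekDom d (3 - e) (r - e), ∀ J : Fin d → ℂ, ‖J‖ < 3 - e →
      ‖nekχ Hc s hI ε I w ρ k x - nekHs Hc hI I w ρ J‖ ≤
        ε / ρ * Ms + 2 * (9 * Λ * ρ) / e * ‖x.1 - J‖) := by
  have hball : ∀ J : Fin d → ℂ, ‖J‖ < 3 → cx d I + (ρ : ℂ) • J ∈ ball (cx d I) l := by
    intro J hJ
    rw [mem_ball, dist_eq_norm, add_sub_cancel_left, norm_smul, Complex.norm_real,
      Real.norm_eq_abs, abs_of_pos hρ]
    nlinarith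
  have hHsb : ∀ J : Fin d → ℂ, ‖J‖ < 3 → ‖nekHs Hc hI I w ρ J‖ ≤ 9 * Λ * ρ := by
    intro J hJ
    refine (nekHs_bound hρ hq (by nlinarith)).trans ?_
    have : ‖J‖ ^ 2 ≤ 9 := by nlinarith [norm_nonneg J]
    nlinarith [mul_pos hΛ hρ]
  have hsb' : ∀ x ∈ nekDom d 3 r, ‖((ε / ρ : ℝ) : ℂ) * s (nekA I w ρ k x)‖ ≤ ε / ρ * Ms := by
    intro x hx
    rw [norm_mul, Complex.norm_real, Real.norm_eq_abs, abs_of_nonneg (by positivity)]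
    gcongr
    exact hsb _ (nekA_mem hρ hDF h3 hx)
  have hερ' : ε / ρ ≤ ρ := by rw [div_le_iff₀ hρ]; nlinarith
  refine ⟨?_, ?_, ?_⟩
  · intro x hx
    refine AnalyticAt.fun_add ?_ (analyticAt_const.fun_mul ?_)
    · exact (nekHs_analytic hI (hH _ (hball _ hx.1))).fun_comp (f := Prod.fst) analyticAt_fst
    · exact (hs _ (nekA_mem hρ hDF h3 hx)).fun_comp (nekA_analytic I w ρ k x)
  · intro x hx
    refine (norm_add_le _ _).trans ?_
    have h1 := hHsb x.1 hx.1
    have h2 := hsb' x hx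
    have : ε / ρ * Ms ≤ ρ * Ms := by gcongr
    linarith
  · intro x hx J hJ
    have hx3 : x ∈ nekDom d 3 r := nekDom_mono (by linarith) (by linarith) hx
    have e1 : nekχ Hc s hI ε I w ρ k x - nekHs Hc hI I w ρ J =
      ((ε / ρ : ℝ) : ℂ) * s (nekA I w ρ k x) + (nekHs Hc hI I w ρ x.1 - nekHs Hc hI I w ρ J) := by
      rw [nekχ]; ring
    rw [e1]
    refine (norm_add_le _ _).trans (add_le_add (hsb' x hx3) ?_)
    have hdHs : DifferentiableOn ℂ (nekHs Hc hI I w ρ) (ball 0 3) := fun z hz =>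
      (nekHs_analytic hI (hH _ (hball _ (by simpa using hz)))).differentiableAt.differentiableWithinAt
    refine Convex.norm_image_sub_le_of_norm_fderiv_le (𝕜 := ℂ) (s := ball 0 (3 - e))
      (f := nekHs Hc hI I w ρ) ?_ ?_ (convex_ball _ _) (by simpa using hJ) (by simpa using hx.1)
    · intro z hz
      refine hdHs.differentiableAt (isOpen_ball.mem_nhds (ball_subset_ball (by linarith) hz))
    · intro z hz
      have hsub : ball z e ⊆ ball 0 3 := by
        apply ball_subset_ball'
        rw [mem_ball] at hz; linarith
      exact nek_cauchy_fderiv he (hdHs.mono hsub) (fun y hy => hHsb y (by simpa using hsub hy))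

theorem nek_im_zero {g : ℝ → ℂ} {g' : ℂ} {t : ℝ} (hg : HasDerivAt g g' t)
    (h0 : ∀ᶠ u in nhds t, (g u).im = 0) : g'.im = 0 := by
  have h1 : HasDerivAt (fun u => (g u).im) g'.im t :=
    Complex.imCLM.hasFDerivAt.comp_hasDerivAt t hg
  have h2 : HasDerivAt (fun u => (g u).im) 0 t :=
    (hasDerivAt_const t (0 : ℝ)).congr_of_eventuallyEq h0
  exact h1.unique h2

theorem cx_single {d : ℕ} (i : Fin d) (t : ℝ) :
    cx d (t • Pi.single i 1) = (t : ℂ) • (Pi.single i 1 : Fin d → ℂ) := by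
  funext j
  by_cases hj : j = i
  · subst hj; simp [cx]
  · simp [cx, hj]

/-- derivative along a real line -/
theorem nek_line {d : ℕ} {s : CPhase d → ℂ} {p : CPhase d} (hs : DifferentiableAt ℂ s p)
    (q : CPhase d) : HasDerivAt (fun t : ℝ => s (p + (t : ℂ) • q)) (fderiv ℂ s p q) 0 := by
  have h1 : HasDerivAt (fun t : ℂ => p + t • q) q 0 := by
    simpa using ((hasDerivAt_id (0 : ℂ)).smul_const q).const_add p
  have hs' : HasFDerivAt s (fderiv ℂ s p) (p + (0 : ℂ) • q) := by simpa using hs.hasFDerivAt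
  have h2 : HasDerivAt (fun t : ℂ => s (p + t • q)) (fderiv ℂ s p q) ((0 : ℝ) : ℂ) := by
    rw [Complex.ofReal_zero]
    exact hs'.comp_hasDerivAt (0 : ℂ) h1
  exact h2.comp_ofReal

theorem nek_cauchy_angle {d : ℕ} {s : CPhase d → ℂ} {DF : Set (CPhase d)} {p : CPhase d} {r Ms : ℝ}
    (hr : 0 < r) (hs : AnalyticOnNhd ℂ s DF) (hsb : ∀ z ∈ DF, ‖s z‖ ≤ Ms) (i : Fin d)
    (hline : ∀ t : ℂ, ‖t‖ < r → p + t • ((0, Pi.single i 1) : CPhase d) ∈ DF) :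
    ‖fderiv ℂ s p (0, Pi.single i 1)‖ ≤ 2 * Ms / r := by
  set q : CPhase d := (0, Pi.single i 1) with hq
  have hl : ∀ t : ℂ, HasDerivAt (fun t : ℂ => p + t • q) q t := fun t => by
    simpa using ((hasDerivAt_id t).smul_const q).const_add p
  have hd : DifferentiableOn ℂ (fun t : ℂ => s (p + t • q)) (ball 0 r) := by
    intro t ht
    have h1 := (hs _ (hline t (by simpa using ht))).differentiableAt
    exact (h1.comp t (hl t).differentiableAt).differentiableWithinAt
  have h2 := nek_cauchy_fderiv hr hd (fun t ht => hsb _ (hline t (by simpa using ht)))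
  have hp : p ∈ DF := by simpa using hline 0 (by simpa using hr)
  have hs' : HasFDerivAt s (fderiv ℂ s p) (p + (0 : ℂ) • q) := by
    simpa using (hs p hp).differentiableAt.hasFDerivAt
  have h3 : HasDerivAt (fun t : ℂ => s (p + t • q)) (fderiv ℂ s p q) 0 :=
    hs'.comp_hasDerivAt (0 : ℂ) (hl 0)
  have h4 : fderiv ℂ (fun t : ℂ => s (p + t • q)) 0 1 = fderiv ℂ s p q := by
    rw [fderiv_apply_one_eq_deriv, h3.deriv]
  rw [← h4]
  have := ContinuousLinearMap.le_of_opNorm_le _ h2 (1 : ℂ)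
  simpa using this

end NekPart9

section NekPart10

open Metric Set

theorem nek_real_step {d : ℕ} {Hc : (Fin d → ℂ) → ℂ} {s : CPhase d → ℂ} {hI ε : ℝ}
    {I : Fin d → ℝ} {ω : (Fin d → ℝ) → Fin d → ℝ} {ρ σ r l Ms : ℝ} (hρ : 0 < ρ) (hr : 0 < r)
    {BR : Set (Fin d → ℝ)} {DF : Set (CPhase d)}
    (hDF : DF = {z : CPhase d |
      (∃ y ∈ BR, dist z.1 (cx d y) ≤ σ) ∧ ∀ i, |(z.2 i).im| ≤ r}) (hIB : I ∈ BR)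
    (h3 : 3 * ρ ≤ σ) (h3l : 3 * ρ ≤ l) (hε : 0 ≤ ε) (hερ : ε * (2 * Ms / r) ≤ ρ)
    (hH : AnalyticOnNhd ℂ Hc (ball (cx d I) l))
    (hg : ∀ x ∈ ball I l, ∀ i, fderiv ℂ Hc (cx d x) (Pi.single i 1) = ω x i)
    (hs : AnalyticOnNhd ℂ s DF) (hMs : 0 ≤ Ms) (hsb : ∀ z ∈ DF, ‖s z‖ ≤ Ms)
    (hsreal : ∀ x : RPhase d, (cx d x.1, cx d x.2) ∈ DF → (s (cx d x.1, cx d x.2)).im = 0)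
    (k : ℕ) {x x' : RPhase d} (hx : ‖x.1 - I‖ ≤ ρ)
    (hF1 : ∃ y ∈ BR, dist x'.1 y ≤ σ)
    (hF2 : ∀ i, x'.1 i = x.1 i -
        ε * (fderiv ℂ s (cx d x'.1, cx d x.2) (0, Pi.single i 1)).re)
    (hF3 : ∀ i, x'.2 i = x.2 i + ω x'.1 i +
        ε * (fderiv ℂ s (cx d x'.1, cx d x.2) (Pi.single i 1, 0)).re) :
    ∃ y : CPhase d, ‖y.1‖ ≤ 2 ∧ (∀ i, (y.2 i).im = 0) ∧
      y.1 + nekGφ (nekχ Hc s hI ε I (ω I) ρ k) y = (nekE I (ω I) ρ k x).1 ∧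
      y.2 = (nekE I (ω I) ρ k x).2 ∧
      (y.1, y.2 + nekGJ (nekχ Hc s hI ε I (ω I) ρ k) y) = nekE I (ω I) ρ (k + 1) x' := by
  set p : CPhase d := (cx d x'.1, cx d x.2) with hp
  have hpim : ∀ i, (p.2 i).im = 0 := fun i => by simp [hp, cx]
  have hpDF : p ∈ DF := by
    rw [hDF]
    obtain ⟨y, hy, hy'⟩ := hF1
    refine ⟨⟨y, hy, by rw [hp, cx_dist]; exact hy'⟩, fun i => ?_⟩
    rw [hpim i, abs_zero]; exact hr.le
  have hline : ∀ i : Fin d, ∀ t : ℂ, ‖t‖ < r → p + t • ((0, Pi.single i 1) : CPhase d) ∈ DF := by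
    intro i t ht
    rw [hDF] at hpDF ⊢
    obtain ⟨⟨y, hy, hy'⟩, -⟩ := hpDF
    refine ⟨⟨y, hy, by simpa using hy'⟩, fun j => ?_⟩
    by_cases hj : j = i
    · subst hj
      simp [hp, cx]
      exact (Complex.abs_im_le_norm t).trans ht.le
    · simp [hp, cx, hj, hr.le]
  have hsd : DifferentiableAt ℂ s p := (hs p hpDF).differentiableAt
  -- closeness
  have hclose : ‖x'.1 - x.1‖ ≤ ρ := by
    rw [pi_norm_le_iff_of_nonneg hρ.le]
    intro i
    have h1 := nek_cauchy_angle hr hs hsb i (hline i)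
    have h2 := Complex.abs_re_le_norm (fderiv ℂ s p (0, Pi.single i 1))
    rw [Pi.sub_apply, hF2 i, Real.norm_eq_abs]
    calc |x.1 i - ε * (fderiv ℂ s p (0, Pi.single i 1)).re - x.1 i|
        = ε * |(fderiv ℂ s p (0, Pi.single i 1)).re| := by
          rw [show x.1 i - ε * (fderiv ℂ s p (0, Pi.single i 1)).re - x.1 i
            = -(ε * (fderiv ℂ s p (0, Pi.single i 1)).re) by ring, abs_neg, abs_mul,
            abs_of_nonneg hε]
      _ ≤ ε * (2 * Ms / r) := by gcongr; exact h2.trans h1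
      _ ≤ ρ := hερ
  have hx' : ‖x'.1 - I‖ ≤ 2 * ρ := by
    calc ‖x'.1 - I‖ = ‖(x'.1 - x.1) + (x.1 - I)‖ := by congr 1; abel
      _ ≤ ρ + ρ := (norm_add_le _ _).trans (add_le_add hclose hx)
      _ = _ := by ring
  -- realness
  have hreφ : ∀ i, (fderiv ℂ s p (0, Pi.single i 1)).im = 0 := by
    intro i
    refine nek_im_zero (nek_line hsd _) (Filter.Eventually.of_forall fun t => ?_)
    have e : p + (t : ℂ) • ((0, Pi.single i 1) : CPhase d)
        = (cx d x'.1, cx d (x.2 + t • Pi.single i 1)) := by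
      rw [cx_add', cx_single]; simp [hp]
    rw [e]
    refine hsreal (x'.1, x.2 + t • Pi.single i 1) ?_
    rw [hDF] at hpDF ⊢
    obtain ⟨hh, -⟩ := hpDF
    exact ⟨hh, fun j => by simp [cx, hr.le]⟩
  have hreJ : ∀ i, (fderiv ℂ s p (Pi.single i 1, 0)).im = 0 := by
    intro i
    refine nek_im_zero (nek_line hsd _) ?_
    filter_upwards [ball_mem_nhds (0 : ℝ) hρ] with t ht
    have e : p + (t : ℂ) • ((Pi.single i 1, 0) : CPhase d)
        = (cx d (x'.1 + t • Pi.single i 1), cx d x.2) := by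
      rw [cx_add', cx_single]; simp [hp]
    rw [e]
    refine hsreal (x'.1 + t • Pi.single i 1, x.2) ?_
    rw [hDF]
    refine ⟨⟨I, hIB, ?_⟩, fun j => by simp [cx, hr.le]⟩
    rw [cx_dist, dist_eq_norm]
    have h1 : ‖t • (Pi.single i 1 : Fin d → ℝ)‖ ≤ ρ := by
      rw [norm_smul]
      have : ‖(Pi.single i 1 : Fin d → ℝ)‖ ≤ 1 := by
        rw [← cx_norm]
        have := cx_single i (1 : ℝ)
        rw [one_smul] at this
        rw [this]
        simpa using nek_single_norm i
      have ht' : ‖t‖ < ρ := by simpa using ht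
      nlinarith [norm_nonneg t]
    calc ‖x'.1 + t • Pi.single i 1 - I‖ = ‖(x'.1 - I) + t • Pi.single i 1‖ := by congr 1; abel
      _ ≤ 2 * ρ + ρ := (norm_add_le _ _).trans (add_le_add hx' h1)
      _ ≤ σ := by linarith
  set y : CPhase d := (cx d (ρ⁻¹ • (x'.1 - I)), cx d (x.2 - (k : ℝ) • ω I)) with hy
  have hρc : (ρ : ℂ) ≠ 0 := by exact_mod_cast hρ.ne'
  have hy1 : cx d I + (ρ : ℂ) • y.1 = cx d x'.1 := by
    funext i
    simp [hy, cx]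
    field_simp
    ring
  have hA : nekA I (ω I) ρ k y = p := by
    rw [nekA, hy1, hp]
    congr 1
    rw [← cx_add']
    congr 1
    abel
  have hbl : x'.1 ∈ ball I l := by
    rw [mem_ball, dist_eq_norm]; linarith
  have hHd : DifferentiableAt ℂ Hc (cx d I + (ρ : ℂ) • y.1) := by
    rw [hy1]
    exact (hH _ (by rw [mem_ball, cx_dist]; exact hbl)).differentiableAt
  have hG := fun i => nekχ_GJ (hI := hI) (ε := ε) hρ hHd (by rw [hA]; exact hsd) i
  refine ⟨y, ?_, ?_, ?_, rfl, ?_⟩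
  · rw [hy, cx_norm, norm_smul, norm_inv, Real.norm_eq_abs, abs_of_pos hρ, inv_mul_le_iff₀ hρ]
    linarith
  · intro i
    simp [hy, cx]
  · funext i
    rw [Pi.add_apply, (hG i).2, hA]
    have e1 : fderiv ℂ s p (0, Pi.single i 1) =
        ((fderiv ℂ s p (0, Pi.single i 1)).re : ℂ) := by
      apply Complex.ext <;> simp [hreφ]
    rw [e1]
    simp only [hy, nekE, cx]
    norm_cast
    simp only [Pi.smul_apply, Pi.sub_apply, smul_eq_mul]
    rw [hF2 i]
    field_simp
    ring
  · refine Prod.ext rfl ?_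
    funext i
    have e1 : fderiv ℂ s p (Pi.single i 1, 0) =
        ((fderiv ℂ s p (Pi.single i 1, 0)).re : ℂ) := by
      apply Complex.ext <;> simp [hreJ]
    change y.2 i + nekGJ _ y i = _
    rw [(hG i).1, hA, hy1, hg _ hbl, e1]
    simp only [hy, nekE, cx]
    norm_cast
    simp only [Pi.smul_apply, Pi.sub_apply, smul_eq_mul]
    rw [hF3 i]
    push_cast
    ring

end NekPart10

section NekPart11

open Metric Set

theorem nek_block {d n : ℕ} {Hc : (Fin d → ℂ) → ℂ} {s : CPhase d → ℂ} {hI ε : ℝ}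
    {I : Fin d → ℝ} {ω : (Fin d → ℝ) → Fin d → ℝ} {ρ σ r l Λ Ms e C' : ℝ} (hρ : 0 < ρ)
    {BR : Set (Fin d → ℝ)} {DF : Set (CPhase d)}
    (hDF : DF = {z : CPhase d |
      (∃ y ∈ BR, dist z.1 (cx d y) ≤ σ) ∧ ∀ i, |(z.2 i).im| ≤ r}) (hIB : I ∈ BR)
    (h3 : 3 * ρ ≤ σ) (h3l : 3 * ρ ≤ l) (hε : 0 ≤ ε) (hερ2 : ε ≤ ρ ^ 2)
    (hερ : ε * (2 * Ms / r) ≤ ρ) (he : 0 < e) (he1 : 8 * e ≤ 1) (her : 8 * e ≤ r)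
    (hH : AnalyticOnNhd ℂ Hc (ball (cx d I) l))
    (hg : ∀ x ∈ ball I l, ∀ i, fderiv ℂ Hc (cx d x) (Pi.single i 1) = ω x i) (hΛ : 0 < Λ)
    (hq : ∀ z : Fin d → ℂ, ‖z‖ < l →
        ‖Hc (cx d I + z) - hI - ∑ i, (ω I i : ℂ) * z i‖ ≤ Λ * ‖z‖ ^ 2)
    (hs : AnalyticOnNhd ℂ s DF) (hMs : 0 ≤ Ms) (hsb : ∀ z ∈ DF, ‖s z‖ ≤ Ms)
    (hsreal : ∀ x : RPhase d, (cx d x.1, cx d x.2) ∈ DF → (s (cx d x.1, cx d x.2)).im = 0)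
    {F : RPhase d → RPhase d}
    (hF : ∀ x : RPhase d, ‖x.1 - I‖ ≤ ρ →
      (∃ y ∈ BR, dist (F x).1 y ≤ σ) ∧
      (∀ i, (F x).1 i = x.1 i -
        ε * (fderiv ℂ s (cx d (F x).1, cx d x.2) (0, Pi.single i 1)).re) ∧
      (∀ i, (F x).2 i = x.2 i + ω (F x).1 i +
        ε * (fderiv ℂ s (cx d (F x).1, cx d x.2) (Pi.single i 1, 0)).re))
    (hμ : 8 * ((9 * Λ + Ms) * ρ) ≤ e ^ 2)
    (hC' : C' = (2 / e * (1 + d * 3) + 1) * ((9 * Λ + Ms) * ρ)) (hne : n * C' ≤ e) :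
    ∃ G : NV d → NV d,
      DifferentiableOn ℂ G {v | v.1 ∈ nekDom d (3 - 4 * e) (r - 4 * e)} ∧
      (∀ v : NV d, v.1 ∈ nekDom d (3 - 4 * e) (r - 4 * e) →
        ‖G v - v‖ ≤ n * C' ∧ (∀ w, nekθ (G v) (fderiv ℂ G v w) = nekθ v w) ∧
        ‖nekθ v (G v - v) - n * nekHs Hc hI I (ω I) ρ v.1.1‖ ≤
          n * (d * (n * C') * C' + ε / ρ * Ms + 2 * (9 * Λ * ρ) / e * (n * C'))) ∧
      (∀ v : NV d, ∀ x : RPhase d, ‖x.1 - I‖ ≤ ρ / 2 → v.1 = nekE I (ω I) ρ 0 x →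
        (G v).1 = nekE I (ω I) ρ n (F^[n] x) ∧ ∀ k ≤ n, ‖(F^[k] x).1 - I‖ ≤ 3 / 4 * ρ) := by
  have hr : 0 < r := by linarith
  have hDF' : ∀ z : CPhase d, dist z.1 (cx d I) ≤ σ → (∀ i, |(z.2 i).im| ≤ r) → z ∈ DF := by
    intro z h1 h2
    rw [hDF]
    exact ⟨⟨I, hIB, h1⟩, h2⟩
  have hχ := fun k => nekχ_props (e := e) hρ hDF' h3 h3l hε hερ2 he hH hΛ hq hs hMs hsb k
  have hst := fun k => nek_step (d := d) (a := 3) (b := r) he (by norm_num) (hχ k).1 (hχ k).2.1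
    (by positivity) hμ
  choose G hGd hG using hst
  have hC0 : 0 ≤ C' := by rw [hC']; positivity
  have hcomp := nek_comp (n := n) (a := 3) (b := r) (e := e) (C' := C') (μ2 := ε / ρ * Ms)
    (Lh := 2 * (9 * Λ * ρ) / e) hC0 hne G (fun k => nekχ Hc s hI ε I (ω I) ρ k)
    (nekHs Hc hI I (ω I) ρ) (by positivity) (fun k _ => hGd k)
    (fun k _ v hv => ⟨by rw [hC']; exact (hG k v hv).1, (hG k v hv).2.1, (hG k v hv).2.2.2.1⟩)
    (fun k _ x hx J hJ => (hχ k).2.2 x (nekDom_mono (by linarith) (by linarith) hx) J (by linarith))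
  refine ⟨nekComp G n, (hcomp n le_rfl).1, fun v hv => ?_, fun v x hx hv => ?_⟩
  · obtain ⟨h1, _, h2, h3⟩ := (hcomp n le_rfl).2 v hv
    exact ⟨h1, h2, h3⟩
  · have hnE : ∀ k, ∀ x : RPhase d, ‖(nekE I (ω I) ρ k x).1‖ = ‖x.1 - I‖ / ρ := by
      intro k x
      rw [nekE, cx_norm, norm_smul, norm_inv, Real.norm_eq_abs, abs_of_pos hρ, inv_mul_eq_div]
    have him : ∀ k, ∀ x : RPhase d, ∀ i, ((nekE I (ω I) ρ k x).2 i).im = 0 := by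
      intro k x i; simp [nekE, cx]
    have hv1 : ‖v.1.1‖ ≤ 1 / 2 := by
      rw [hv, hnE, div_le_iff₀ hρ]; linarith
    have hvm : v.1 ∈ nekDom d (3 - 4 * e) (r - 4 * e) := by
      refine ⟨by linarith, fun i => ?_⟩
      rw [hv, him, abs_zero]; linarith
    have hdisp : ∀ k ≤ n, (nekComp G k v).1 = nekE I (ω I) ρ k (F^[k] x) →
        ‖(F^[k] x).1 - I‖ ≤ 3 / 4 * ρ := by
      intro k hk heq
      have h1 := ((hcomp k hk).2 v hvm).1
      have h2 : ‖(nekComp G k v).1.1 - v.1.1‖ ≤ e := by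
        refine ((norm_fst_le (nekComp G k v - v).1).trans (norm_fst_le (nekComp G k v - v))).trans
          (h1.trans (le_trans ?_ hne))
        gcongr
      have h3 : ‖(nekComp G k v).1.1‖ ≤ 3 / 4 := by
        have := norm_sub_norm_le (nekComp G k v).1.1 v.1.1
        linarith
      rw [heq, hnE, div_le_iff₀ hρ] at h3
      linarith
    have hind : ∀ k ≤ n, (nekComp G k v).1 = nekE I (ω I) ρ k (F^[k] x) := by
      intro k
      induction k with
      | zero => intro _; simpa [nekComp] using hv
      | succ k ih =>
        intro hk
        have ihk := ih (by omega)
        have hxk : ‖(F^[k] x).1 - I‖ ≤ ρ := (hdisp k (by omega) ihk).trans (by linarith)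
        obtain ⟨f1, f2, f3⟩ := hF _ hxk
        obtain ⟨y, y1, y2, y3, y4, y5⟩ := nek_real_step (hI := hI) hρ hr hDF hIB h3 h3l hε hερ hH hg hs
          hMs hsb hsreal k hxk f1 f2 f3
        have hu := ((hcomp k (by omega)).2 v hvm).2.1
        have := (hG k (nekComp G k v) hu).2.2.2.2 y
          ⟨by linarith, fun i => by rw [y2 i, abs_zero]; linarith⟩
          (by rw [y3, ihk]) (by rw [y4, ihk])
        change (G k (nekComp G k v)).1 = _
        rw [this, y5, Function.iterate_succ_apply']
    exact ⟨hind n le_rfl, fun k hk => hdisp k hk (hind k hk)⟩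

end NekPart11

section NekPart12

open Metric Set

theorem nek_lift_iter {d : ℕ} {F : RPhase d → RPhase d}
    (hlift : ∀ x : RPhase d, ∀ e : Fin d → ℤ,
      F (x.1, x.2 + fun i => (e i : ℝ)) = ((F x).1, (F x).2 + fun i => (e i : ℝ)))
    (x : RPhase d) (e : Fin d → ℤ) (k : ℕ) :
    F^[k] (x.1, x.2 + fun i => (e i : ℝ)) = ((F^[k] x).1, (F^[k] x).2 + fun i => (e i : ℝ)) := by
  induction k with
  | zero => rfl
  | succ k ih => rw [Function.iterate_succ_apply', ih, hlift, Function.iterate_succ_apply']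

theorem nek_tri {a0 a1 K0 K1 : ℂ} {E D : ℝ} (h1 : ‖K1 - a1‖ ≤ E) (h0 : ‖K0 - a0‖ ≤ E)
    (hD : ‖K1 - K0‖ ≤ D) : ‖a1‖ ≤ ‖a0‖ + 2 * E + D := by
  have e1 : a1 = a0 + (-(K1 - a1) + (K0 - a0) + (K1 - K0)) := by ring
  have h2 : ‖a1‖ ≤ ‖a0‖ + ‖-(K1 - a1) + (K0 - a0) + (K1 - K0)‖ := by
    conv_lhs => rw [e1]
    exact norm_add_le _ _
  have h3 : ‖-(K1 - a1) + (K0 - a0) + (K1 - K0)‖ ≤ ‖-(K1 - a1)‖ + ‖K0 - a0‖ + ‖K1 - K0‖ :=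
    norm_add₃_le
  rw [norm_neg] at h3
  linarith

theorem nek_iter {d n m : ℕ} (hn : 0 < n) {hs : (Fin d → ℂ) → ℂ} {G : NV d → NV d}
    {F : RPhase d → RPhase d} {I w : Fin d → ℝ} {ρ r e δ Err1 ν Λ r₀ N : ℝ} (hρ : 0 < ρ)
    (he : 0 < e) (he1 : 8 * e ≤ 1) (her : 8 * e ≤ r) (hδ : 0 ≤ δ) (hν : 0 < ν) (hΛ : 0 < Λ)
    (hGd : DifferentiableOn ℂ G {v | v.1 ∈ nekDom d (3 - 4 * e) (r - 4 * e)})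
    (hG : ∀ v : NV d, v.1 ∈ nekDom d (3 - 4 * e) (r - 4 * e) →
        ‖G v - v‖ ≤ δ ∧ (∀ w, nekθ (G v) (fderiv ℂ G v w) = nekθ v w) ∧
        ‖nekθ v (G v - v) - n * hs v.1.1‖ ≤ Err1)
    (hGr : ∀ v : NV d, ∀ x : RPhase d, ‖x.1 - I‖ ≤ ρ / 2 → v.1 = nekE I w ρ 0 x →
        (G v).1 = nekE I w ρ n (F^[n] x) ∧ ∀ k ≤ n, ‖(F^[k] x).1 - I‖ ≤ 3 / 4 * ρ)
    (hlow : ∀ u : Fin d → ℝ, ‖u‖ ≤ 1 → ν / 2 * ρ * ‖u‖ ^ 2 ≤ ‖hs (cx d u)‖)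
    (hup : ∀ u : Fin d → ℝ, ‖u‖ ≤ 1 → ‖hs (cx d u)‖ ≤ Λ * ρ * ‖u‖ ^ 2)
    (hlift : ∀ x : RPhase d, ∀ e : Fin d → ℤ,
      F (x.1, x.2 + fun i => (e i : ℝ)) = ((F x).1, (F x).2 + fun i => (e i : ℝ)))
    (hres : ∀ i, ∃ z : ℤ, (n : ℝ) * w i = (z : ℝ))
    (hm1 : 1 ≤ m) (hm : 400 * (m * δ) ≤ e) (hr₀ : 0 ≤ r₀) (hr₀2 : r₀ ≤ 1 / 2)
    (hbud : Λ * ρ * n * r₀ ^ 2 + 2 * (Err1 + (d + 1) * (16 * δ ^ 2 / e))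
      + N * ((d + 1) * (e * Real.exp (-m))) ≤ ν / 8 * ρ * n)
    {x₀ : RPhase d} (hx₀ : ‖x₀.1 - I‖ ≤ r₀ * ρ) :
    ∀ k : ℕ, (k : ℝ) ≤ N → ‖(F^[k] x₀).1 - I‖ < ρ := by
  choose z hz using hres
  have hn0 : (0 : ℝ) < n := by exact_mod_cast hn
  have hnE : ∀ k, ∀ x : RPhase d, ‖(nekE I w ρ k x).1‖ = ‖x.1 - I‖ / ρ := by
    intro k x
    rw [nekE, cx_norm, norm_smul, norm_inv, Real.norm_eq_abs, abs_of_pos hρ, inv_mul_eq_div]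
  have him : ∀ k, ∀ x : RPhase d, ∀ i, ((nekE I w ρ k x).2 i).im = 0 := by
    intro k x i; simp [nekE, cx]
  -- real points: ball in the domain
  have hball : ∀ v : NV d, ∀ x : RPhase d, v.1 = nekE I w ρ 0 x → ‖x.1 - I‖ ≤ ρ →
      ball v e ⊆ {v | v.1 ∈ nekDom d (3 - 4 * e) (r - 4 * e)} := by
    intro v x hv hx u hu
    refine nekDom_closedBall (e := e) (x := v.1) ?_ ?_
    · refine ⟨?_, fun i => ?_⟩
      · rw [hv, hnE]
        have : ‖x.1 - I‖ / ρ ≤ 1 := by rw [div_le_one hρ]; exact hx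
        linarith
      · rw [hv, him, abs_zero]; linarith
    · rw [mem_ball, dist_eq_norm] at hu
      rw [mem_closedBall, dist_eq_norm]
      exact (norm_fst_le (u - v)).trans hu.le
  -- energy vs leading part
  have hlead : ∀ v : NV d, ∀ x : RPhase d, v.1 = nekE I w ρ 0 x → ‖x.1 - I‖ ≤ ρ →
      ‖nekK G m v - n * hs v.1.1‖ ≤ Err1 + (d + 1) * (16 * δ ^ 2 / e) := by
    intro v x hv hx
    have hb := hball v x hv hx
    have h1 := nek_energy_lead hδ he (hGd.mono hb) (fun u hu => (hG u (hb hu)).1) hm1 hm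
    have h2 := (hG v (hb (mem_ball_self he))).2.2
    have h3 : ‖v.1.1‖ ≤ 1 := by rw [hv, hnE, div_le_one hρ]; exact hx
    have h4 : (d * ‖v.1.1‖ + 1) * (16 * δ ^ 2 / e) ≤ (d + 1) * (16 * δ ^ 2 / e) := by
      gcongr
      nlinarith [Nat.cast_nonneg (α := ℝ) d]
    calc ‖nekK G m v - n * hs v.1.1‖
        = ‖(nekK G m v - nekθ v (G v - v)) + (nekθ v (G v - v) - n * hs v.1.1)‖ := by
          congr 1; ring
      _ ≤ _ := (norm_add_le _ _).trans (by linarith)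
  set v₀ : NV d := (nekE I w ρ 0 x₀, 0) with hv₀
  have hx₀1 : ‖x₀.1 - I‖ ≤ ρ / 2 := hx₀.trans (by nlinarith)
  have hK0 := hlead v₀ x₀ rfl (by linarith)
  have hhs0 : ‖hs v₀.1.1‖ ≤ Λ * ρ * r₀ ^ 2 := by
    have hu : ‖ρ⁻¹ • (x₀.1 - I)‖ ≤ r₀ := by
      rw [norm_smul, norm_inv, Real.norm_eq_abs, abs_of_pos hρ, inv_mul_le_iff₀ hρ]; linarith
    refine (hup _ (by linarith)).trans ?_
    gcongr
  have key : ∀ j : ℕ, (j : ℝ) ≤ N → ∃ y : RPhase d, ∃ e' : Fin d → ℤ,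
      y = ((F^[n * j] x₀).1, (F^[n * j] x₀).2 + fun i => (e' i : ℝ)) ∧
      (G^[j] v₀).1 = nekE I w ρ 0 y ∧ ‖y.1 - I‖ ≤ ρ / 2 ∧
      ‖nekK G m (G^[j] v₀) - nekK G m v₀‖ ≤ j * ((d + 1) * (e * Real.exp (-m))) := by
    intro j
    induction j with
    | zero =>
      intro _
      exact ⟨x₀, 0, by ext <;> simp, rfl, hx₀1, by simp⟩
    | succ j ih =>
      intro hj
      push_cast at hj
      obtain ⟨y, e', hy, hv, hyn, hK⟩ := ih (by linarith)
      set v := G^[j] v₀ with hvdef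
      obtain ⟨g1, g2⟩ := hGr v y hyn hv
      have hFy : F^[n] y = ((F^[n * (j + 1)] x₀).1,
          (F^[n * (j + 1)] x₀).2 + fun i => (e' i : ℝ)) := by
        rw [hy, nek_lift_iter hlift (F^[n * j] x₀) e' n, ← Function.iterate_add_apply]
        rw [show n + n * j = n * (j + 1) by ring]
      set y' : RPhase d := ((F^[n] y).1, (F^[n] y).2 - (n : ℝ) • w) with hy'
      have hv' : (G v).1 = nekE I w ρ 0 y' := by
        rw [g1, nekE, nekE]
        simp [hy']
      have hy'n : ‖y'.1 - I‖ ≤ 3 / 4 * ρ := g2 n le_rfl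
      have hb := hball v y hv (by linarith)
      have hdr := nek_energy_drift hδ he (hGd.mono hb) (fun u hu => (hG u (hb hu)).1)
        (hG v (hb (mem_ball_self he))).2.1 hm1 hm
      have h3 : ‖(G v).1.1‖ ≤ 1 := by rw [hv', hnE, div_le_one hρ]; linarith
      have hdr' : ‖nekK G m (G v) - nekK G m v‖ ≤ (d + 1) * (e * Real.exp (-m)) := by
        refine hdr.trans ?_
        gcongr
        nlinarith [Nat.cast_nonneg (α := ℝ) d]
      have hKn : ‖nekK G m (G v) - nekK G m v₀‖ ≤ (j + 1) * ((d + 1) * (e * Real.exp (-m))) := by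
        calc ‖nekK G m (G v) - nekK G m v₀‖
            = ‖(nekK G m (G v) - nekK G m v) + (nekK G m v - nekK G m v₀)‖ := by congr 1; ring
          _ ≤ _ := (norm_add_le _ _).trans (by linarith)
      rw [Function.iterate_succ_apply', ← hvdef]
      refine ⟨y', fun i => e' i - z i, ?_, hv', ?_, by push_cast; exact hKn⟩
      · rw [hy', hFy]
        refine Prod.ext rfl ?_
        funext i
        simp [hz i]
        ring
      · have hl := hlead (G v) y' hv' (by linarith)
        have hu1 : ‖ρ⁻¹ • (y'.1 - I)‖ = ‖y'.1 - I‖ / ρ := by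
          rw [norm_smul, norm_inv, Real.norm_eq_abs, abs_of_pos hρ, inv_mul_eq_div]
        have hlo := hlow (ρ⁻¹ • (y'.1 - I)) (by rw [hu1, div_le_one hρ]; linarith)
        have hcx : (G v).1.1 = cx d (ρ⁻¹ • (y'.1 - I)) := by rw [hv']; rfl
        rw [← hcx, hu1] at hlo
        have t1 : ‖(n : ℂ) * hs (G v).1.1‖ ≤ ‖(n : ℂ) * hs v₀.1.1‖
            + 2 * (Err1 + (d + 1) * (16 * δ ^ 2 / e))
            + (j + 1) * ((d + 1) * (e * Real.exp (-m))) := by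
          exact nek_tri hl hK0 hKn
        rw [norm_mul, norm_mul, Complex.norm_natCast] at t1
        have t2 : (j + 1) * ((d + 1) * (e * Real.exp (-m))) ≤ N * ((d + 1) * (e * Real.exp (-m))) := by
          gcongr
        have t3 : n * ‖hs v₀.1.1‖ ≤ n * (Λ * ρ * r₀ ^ 2) := by gcongr
        have t4 : n * (ν / 2 * ρ * (‖y'.1 - I‖ / ρ) ^ 2) ≤ n * ‖hs (G v).1.1‖ := by gcongr
        have t5 : n * (ν / 2 * ρ * (‖y'.1 - I‖ / ρ) ^ 2) ≤ ν / 8 * ρ * n := by linarith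
        have hp : 0 < n * (ν / 2 * ρ) := by positivity
        have t6 : (‖y'.1 - I‖ / ρ) ^ 2 ≤ (1 / 2) ^ 2 := by
          refine le_of_mul_le_mul_left ?_ hp
          linarith
        have t7 := abs_le_of_sq_le_sq t6 (by norm_num)
        have t8 : ‖y'.1 - I‖ / ρ ≤ 1 / 2 := (le_abs_self _).trans t7
        rw [div_le_iff₀ hρ] at t8
        linarith
  intro k hk
  have hj : ((k / n : ℕ) : ℝ) ≤ N := le_trans (by exact_mod_cast Nat.div_le_self k n) hk
  obtain ⟨y, e', hy, hv, hyn, -⟩ := key (k / n) hj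
  have h1 := (hGr _ y hyn hv).2 (k % n) (Nat.mod_lt k hn).le
  rw [hy, nek_lift_iter hlift (F^[n * (k / n)] x₀) e' (k % n), ← Function.iterate_add_apply,
    Nat.mod_add_div] at h1
  exact lt_of_le_of_lt h1 (by linarith)

end NekPart12

section NekPart13

open Metric Set

theorem nek_expo {e D γ t ν c₂ : ℝ} {d : ℕ} (he : 0 < e) (hD : 0 < D) (hγ : 0 < γ) (ht : 0 < t)
    (hc₂ : c₂ = ν * γ * (e / (400 * D * γ)) / (128 * ((d + 1) * e * Real.exp 1))) (hν : 0 < ν) :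
    c₂ * Real.exp (e / (400 * D * γ) / 2 * t⁻¹) *
      ((d + 1) * (e * Real.exp (-(⌊e / (400 * (D * (γ * t)))⌋₊ : ℝ)))) ≤ ν / 64 * (γ * t) := by
  set κ := e / (400 * D * γ) with hκ
  have hκ0 : 0 < κ := by positivity
  have hq : e / (400 * (D * (γ * t))) = κ * t⁻¹ := by rw [hκ]; field_simp
  rw [hq]
  have hfl : κ * t⁻¹ < (⌊κ * t⁻¹⌋₊ : ℝ) + 1 := Nat.lt_floor_add_one _
  have h1 : Real.exp (-(⌊κ * t⁻¹⌋₊ : ℝ)) ≤ Real.exp 1 * Real.exp (-(κ * t⁻¹)) := by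
    rw [← Real.exp_add]
    apply Real.exp_le_exp.2
    linarith
  set x := κ / 2 * t⁻¹ with hx
  have hx0 : 0 < x := by positivity
  have hxx : κ * t⁻¹ = x + x := by rw [hx]; ring
  have hc0 : 0 < c₂ := by rw [hc₂]; positivity
  have h2 : Real.exp (-x) ≤ 1 / x := by
    rw [Real.exp_neg, ← one_div]
    exact one_div_le_one_div_of_le hx0 (by linarith [Real.add_one_le_exp x])
  calc c₂ * Real.exp x * ((d + 1) * (e * Real.exp (-(⌊κ * t⁻¹⌋₊ : ℝ))))
      ≤ c₂ * Real.exp x * ((d + 1) * (e * (Real.exp 1 * Real.exp (-(κ * t⁻¹))))) := by gcongr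
    _ = c₂ * ((d + 1) * e * Real.exp 1) * (Real.exp x * Real.exp (-x) * Real.exp (-x)) := by
        rw [hxx, neg_add, Real.exp_add]; ring
    _ = c₂ * ((d + 1) * e * Real.exp 1) * Real.exp (-x) := by
        rw [← Real.exp_add x, add_neg_cancel, Real.exp_zero, one_mul]
    _ ≤ c₂ * ((d + 1) * e * Real.exp 1) * (1 / x) := by gcongr
    _ = ν / 64 * (γ * t) := by
        rw [hc₂, hx]
        have : Real.exp 1 ≠ 0 := (Real.exp_pos 1).ne'
        field_simp
        norm_num

theorem nek_budget {e D γ t ν Λ M C3 ρ ε r₀ N X : ℝ} {d n : ℕ} (hn : 0 < n) (he : 0 < e) (hD : 0 < D)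
    (hγ : 1 ≤ γ) (ht : 0 < t) (hν : 0 < ν) (hM : 0 < M) (hρ : ρ = γ * t / n)
    (hγM : 128 * M ≤ ν * γ)
    (hC3 : C3 = d * D ^ 2 + 18 * Λ * D / e + 16 * (d + 1) * D ^ 2 / e)
    (hβ : γ * t * (128 * C3 / ν) ≤ 1) (hr₀ : Λ * r₀ ^ 2 ≤ ν / 64) (hερ : γ ^ 2 * ε ≤ ρ ^ 2)
    (hX : N * X ≤ ν / 64 * (γ * t)) :
    Λ * ρ * n * r₀ ^ 2 + 2 * (n * (d * (n * (D * ρ)) * (D * ρ) + ε / ρ * M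
        + 2 * (9 * Λ * ρ) / e * (n * (D * ρ)))
        + (d + 1) * (16 * (n * (D * ρ)) ^ 2 / e)) + N * X ≤ ν / 8 * ρ * n := by
  have hn0 : (0 : ℝ) < n := by exact_mod_cast hn
  set β := γ * t with hβd
  have hβ0 : 0 < β := by positivity
  have hρ0 : 0 < ρ := by rw [hρ]; positivity
  have hρn : n * ρ = β := by rw [hρ]; field_simp
  have e1 : n * (D * ρ) = D * β := by rw [← hρn]; ring
  have e2 : n * (d * (n * (D * ρ)) * (D * ρ) + ε / ρ * M + 2 * (9 * Λ * ρ) / e * (n * (D * ρ)))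
      + (d + 1) * (16 * (n * (D * ρ)) ^ 2 / e) = β ^ 2 * C3 + β * (ε / ρ ^ 2) * M := by
    have : n * (d * (n * (D * ρ)) * (D * ρ) + ε / ρ * M + 2 * (9 * Λ * ρ) / e * (n * (D * ρ)))
      = d * (D * β) * (n * (D * ρ)) + n * (ε / ρ) * M + 2 * (9 * Λ * (n * ρ)) / e * (D * β) := by
      rw [e1]
      ring_nf
      rw [← hρn]; ring
    rw [this, e1, hρn, hC3]
    have : n * (ε / ρ) = β * (ε / ρ ^ 2) := by rw [← hρn]; field_simp
    rw [this]
    ring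
  rw [e2]
  have hq : ε / ρ ^ 2 * M ≤ ν / 128 := by
    have h1 : ε / ρ ^ 2 ≤ 1 / γ ^ 2 := by
      rw [div_le_div_iff₀ (by positivity) (by positivity)]; linarith
    calc ε / ρ ^ 2 * M ≤ 1 / γ ^ 2 * M := by gcongr
      _ ≤ ν / 128 := by
        rw [div_mul_eq_mul_div, div_le_div_iff₀ (by positivity) (by norm_num)]
        nlinarith [mul_pos hν (by linarith : (0 : ℝ) < γ), mul_nonneg (mul_pos hν (by linarith : (0 : ℝ) < γ)).le (by linarith : 0 ≤ γ - 1)]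
  have hb3 : β * C3 ≤ ν / 128 := by
    rw [← mul_div_assoc, div_le_one hν] at hβ
    linarith
  have t1 : β * (β * C3) ≤ β * (ν / 128) := by gcongr
  have t2 : β * (ε / ρ ^ 2 * M) ≤ β * (ν / 128) := by gcongr
  have t3 : β * (Λ * r₀ ^ 2) ≤ β * (ν / 64) := by gcongr
  have e3 : Λ * ρ * n * r₀ ^ 2 = β * (Λ * r₀ ^ 2) := by rw [← hρn]; ring
  have e4 : ν / 8 * ρ * n = ν / 8 * β := by rw [← hρn]; ring
  rw [e3, e4]
  nlinarith [mul_pos hν hβ0]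

end NekPart13

section NekPart14

open Metric Set

theorem nek_hlow {d : ℕ} (hd : 1 ≤ d) {ν σ ρ l : ℝ} (hν : 0 < ν) (hρ : 0 < ρ)
    {h : (Fin d → ℝ) → ℝ} {U : Set (Fin d → ℝ)} {I : Fin d → ℝ}
    (hU : closedBall I σ ⊆ U) (hρσ : ρ ≤ σ) (hρl : ρ < l) {ω : (Fin d → ℝ) → Fin d → ℝ}
    (hω : ∀ I ∈ U, HasFDerivAt h
      (∑ i, ω I i • (ContinuousLinearMap.proj i : (Fin d → ℝ) →L[ℝ] ℝ)) I)
    (hconvex : ∀ I ∈ U, ∀ v : Fin d → ℝ,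
      ν * ∑ i, v i ^ 2 ≤ ∑ i, fderiv ℝ ω I v i * v i)
    {Hc : (Fin d → ℂ) → ℂ} (hH : ∀ x ∈ ball I l, Hc (cx d x) = h x)
    (u : Fin d → ℝ) (hu : ‖u‖ ≤ 1) :
    ν / 2 * ρ * ‖u‖ ^ 2 ≤ ‖nekHs Hc (h I) I (ω I) ρ (cx d u)‖ := by
  have hn : ‖ρ • u‖ ≤ ρ := by
    rw [norm_smul, Real.norm_of_nonneg hρ.le]; nlinarith [norm_nonneg u]
  have h1 := nek_convex hd hν hU (hn.trans hρσ) hω hconvex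
  have h2 : nekHs Hc (h I) I (ω I) ρ (cx d u)
      = (((h (I + ρ • u) - h I - ∑ i, ω I i * (ρ • u) i) / ρ : ℝ) : ℂ) := by
    have h3 : cx d I + (ρ : ℂ) • cx d u = cx d (I + ρ • u) := by
      funext i; simp [cx]
    unfold nekHs
    rw [h3, hH _ (by rw [mem_ball, dist_eq_norm, add_sub_cancel_left]; linarith)]
    simp [cx]
  rw [h2, Complex.norm_real]
  refine le_trans ?_ (le_abs_self _)
  rw [le_div_iff₀ hρ]
  have h4 : ‖u‖ ^ 2 ≤ ∑ i, u i ^ 2 := by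
    have h6 : (0 : ℝ) ≤ ∑ i, u i ^ 2 := Finset.sum_nonneg fun i _ => sq_nonneg _
    have h7 : ‖u‖ ≤ √(∑ i, u i ^ 2) := by
      rw [pi_norm_le_iff_of_nonneg (Real.sqrt_nonneg _)]
      intro i
      rw [Real.norm_eq_abs]
      exact Real.abs_le_sqrt
        (Finset.single_le_sum (f := fun i => u i ^ 2) (fun i _ => sq_nonneg _) (Finset.mem_univ i))
    calc ‖u‖ ^ 2 ≤ √(∑ i, u i ^ 2) ^ 2 := pow_le_pow_left₀ (norm_nonneg u) h7 2
      _ = _ := Real.sq_sqrt h6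
  have h5 : ∑ i, (ρ • u) i ^ 2 = ρ ^ 2 * ∑ i, u i ^ 2 := by
    rw [Finset.mul_sum]; exact Finset.sum_congr rfl fun i _ => by simp; ring
  rw [h5] at h1
  refine le_trans ?_ h1
  have : 0 ≤ ν / 2 * ρ ^ 2 := by positivity
  nlinarith [mul_le_mul_of_nonneg_left h4 this]

/-- the smallness conditions in terms of `ε` -/
theorem nek_eps {d n : ℕ} {γ ε t ρ : ℝ} (hε : 0 < ε) (hn : 0 < n)
    (hγ : 1 ≤ γ)
    (hnε : (n : ℝ) < ε ^ (-((d : ℝ) / (2 * ((d : ℝ) + 1)))))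
    (ht : t = ε ^ (1 / (2 * ((d : ℝ) + 1)))) (hρ : ρ = γ * t / n) : γ ^ 2 * ε ≤ ρ ^ 2 := by
  have hn' : (0 : ℝ) < n := by exact_mod_cast hn
  have h1 : (n : ℝ) * ε ^ (1 / 2 : ℝ) ≤ t := by
    have : t = ε ^ (-((d : ℝ) / (2 * ((d : ℝ) + 1)))) * ε ^ (1 / 2 : ℝ) := by
      rw [ht, ← Real.rpow_add hε]; congr 1; field_simp; ring
    rw [this]
    exact mul_le_mul_of_nonneg_right hnε.le (by positivity)
  have h2 : (ε ^ (1 / 2 : ℝ)) ^ 2 = ε := by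
    rw [← Real.rpow_natCast, ← Real.rpow_mul hε.le]; norm_num
  have h3 : γ * ε ^ (1 / 2 : ℝ) ≤ ρ := by
    rw [hρ, le_div_iff₀ hn']; nlinarith
  calc γ ^ 2 * ε = (γ * ε ^ (1 / 2 : ℝ)) ^ 2 := by rw [mul_pow, h2]
    _ ≤ ρ ^ 2 := pow_le_pow_left₀ (by positivity) h3 2

end NekPart14

set_option maxHeartbeats 1000000 in
/-- **Long term stability of actions near a fully resonant torus.**
In the Nekhoroshev setting (see the paper), there are constants `γ₀ > 0` and
`r₀ ∈ (0,1)` such that for every `γ ≥ γ₀` there are positive `ε₀, c₂, c₃` with: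
if `0 < ε ≤ ε₀`, `n < ε^{−d/(2(d+1))}` is a natural number, and `I* ∈ B_R` is fully
resonant (`n ω(I*) ∈ ℤ^d`), then every trajectory with `|I₀ − I*| < r₀ ρ_n` satisfies
`|I_k − I*| < ρ_n` for all `0 ≤ k ≤ c₂ exp(c₃ ε^{−1/(2(d+1))})`, where
`ρ_n = γ n^{−1} ε^{1/(2(d+1))}`. -/
theorem long_term_stability_near_resonant_torus (d : ℕ) (hd : 1 ≤ d)
    (R σ r ν εbar Ms : ℝ)
    (hR : 0 < R) (hσ : 0 < σ) (hr : 0 < r) (hν : 0 < ν) (hεbar : 0 < εbar)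
    (c₀ : Fin d → ℝ) (BR : Set (Fin d → ℝ)) (hBR : BR = Metric.closedBall c₀ R)
    (Uσ : Set (Fin d → ℝ)) (hUσ : Uσ = {I | ∃ y ∈ BR, dist I y ≤ σ})
    (DF : Set (CPhase d))
    (hDF : DF = {z : CPhase d |
      (∃ y ∈ BR, dist z.1 (cx d y) ≤ σ) ∧ ∀ i, |(z.2 i).im| ≤ r})
    (h₀ : (Fin d → ℝ) → ℝ) (hh₀ : AnalyticOnNhd ℝ h₀ Uσ)
    (ω : (Fin d → ℝ) → Fin d → ℝ)
    (hω : ∀ I ∈ Uσ, HasFDerivAt h₀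
      (∑ i, ω I i • (ContinuousLinearMap.proj i : (Fin d → ℝ) →L[ℝ] ℝ)) I)
    (hconvex : ∀ I ∈ Uσ, ∀ v : Fin d → ℝ,
      ν * ∑ i, v i ^ 2 ≤ ∑ i, fderiv ℝ ω I v i * v i)
    (s : ℝ → CPhase d → ℂ)
    (hsa : ∀ ε ∈ Set.Icc (0 : ℝ) εbar, AnalyticOnNhd ℂ (s ε) DF)
    (hsreal : ∀ ε ∈ Set.Icc (0 : ℝ) εbar, ∀ x : RPhase d,
      (cx d x.1, cx d x.2) ∈ DF → (s ε (cx d x.1, cx d x.2)).im = 0)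
    (hsper : ∀ ε ∈ Set.Icc (0 : ℝ) εbar, ∀ z ∈ DF, ∀ e : Fin d → ℤ,
      s ε (z.1, z.2 + fun i => ((e i : ℝ) : ℂ)) = s ε z)
    (hsbound : ∀ ε ∈ Set.Icc (0 : ℝ) εbar, ∀ z ∈ DF, ‖s ε z‖ ≤ Ms)
    (F : ℝ → RPhase d → RPhase d)
    (hF : ∀ ε ∈ Set.Icc (0 : ℝ) εbar, ∀ x : RPhase d,
      (∃ y ∈ BR, dist x.1 y ≤ σ / 2) →
      (∃ y ∈ BR, dist (F ε x).1 y ≤ σ) ∧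
      (∀ i, (F ε x).1 i = x.1 i -
        ε * (fderiv ℂ (s ε) (cx d (F ε x).1, cx d x.2) (0, Pi.single i 1)).re) ∧
      (∀ i, (F ε x).2 i = x.2 i + ω (F ε x).1 i +
        ε * (fderiv ℂ (s ε) (cx d (F ε x).1, cx d x.2) (Pi.single i 1, 0)).re))
    (hlift : ∀ ε ∈ Set.Icc (0 : ℝ) εbar, ∀ x : RPhase d, ∀ e : Fin d → ℤ,
      F ε (x.1, x.2 + fun i => (e i : ℝ)) = ((F ε x).1, (F ε x).2 + fun i => (e i : ℝ))) :
    ∃ γ₀ r₀ : ℝ, 0 < γ₀ ∧ 0 < r₀ ∧ r₀ < 1 ∧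
      ∀ γ : ℝ, γ₀ ≤ γ →
        ∃ ε₀ c₂ c₃ : ℝ, 0 < ε₀ ∧ ε₀ ≤ εbar ∧ 0 < c₂ ∧ 0 < c₃ ∧
          ∀ ε : ℝ, 0 < ε → ε ≤ ε₀ →
            ∀ n : ℕ, 0 < n → (n : ℝ) < ε ^ (-((d : ℝ) / (2 * ((d : ℝ) + 1)))) →
              ∀ Istar : Fin d → ℝ, Istar ∈ BR →
                (∀ i, ∃ z : ℤ, (n : ℝ) * ω Istar i = (z : ℝ)) →
                ∀ x₀ : RPhase d,
                  ‖x₀.1 - Istar‖ < r₀ * (γ * ε ^ (1 / (2 * ((d : ℝ) + 1))) / n) →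
                  ∀ k : ℕ,
                    (k : ℝ) ≤ c₂ * Real.exp (c₃ * ε ^ (-(1 / (2 * ((d : ℝ) + 1))))) →
                    ‖((F ε)^[k] x₀).1 - Istar‖ <
                      γ * ε ^ (1 / (2 * ((d : ℝ) + 1))) / n := by
  have hUc : ∀ I ∈ BR, Metric.closedBall I σ ⊆ Uσ := by
    intro I hI x hx; rw [hUσ]; exact ⟨I, hI, hx⟩
  have hK : IsCompact BR := by rw [hBR]; exact isCompact_closedBall _ _
  obtain ⟨l, hl, hlσ, Λ, hΛ, hpack⟩ := nek_package hd hσ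
    (fun I hI => Metric.ball_subset_closedBall.trans (hUc I hI)) hK hh₀ hω
  obtain ⟨M, hMdef⟩ : ∃ M, M = |Ms| + 1 := ⟨_, rfl⟩
  have hM : 0 < M := by rw [hMdef]; positivity
  have hMs : Ms ≤ M := by rw [hMdef]; linarith [le_abs_self Ms]
  obtain ⟨e, hedef⟩ : ∃ e, e = min 1 r / 8 := ⟨_, rfl⟩
  have he : 0 < e := by rw [hedef]; have := lt_min one_pos hr; positivity
  have he1 : 8 * e ≤ 1 := by rw [hedef]; linarith [min_le_left 1 r]
  have her : 8 * e ≤ r := by rw [hedef]; linarith [min_le_right 1 r]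
  obtain ⟨A, hA⟩ : ∃ A, A = 9 * Λ + M := ⟨_, rfl⟩
  have hA0 : 0 < A := by rw [hA]; positivity
  obtain ⟨D, hDdef⟩ : ∃ D, D = (2 / e * (1 + d * 3) + 1) * A := ⟨_, rfl⟩
  have hD : 0 < D := by rw [hDdef]; positivity
  obtain ⟨C3, hC3⟩ : ∃ C3, C3 = d * D ^ 2 + 18 * Λ * D / e + 16 * (d + 1) * D ^ 2 / e := ⟨_, rfl⟩
  have hC30 : 0 < C3 := by rw [hC3]; positivity
  obtain ⟨r₀, hr₀def⟩ : ∃ r₀, r₀ = min (1 / 2) (ν / (64 * Λ)) := ⟨_, rfl⟩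
  have hr₀ : 0 < r₀ := by rw [hr₀def]; exact lt_min (by norm_num) (by positivity)
  have hr₀2 : r₀ ≤ 1 / 2 := by rw [hr₀def]; exact min_le_left _ _
  have hr₀Λ : Λ * r₀ ^ 2 ≤ ν / 64 := by
    have h1 : r₀ ≤ ν / (64 * Λ) := by rw [hr₀def]; exact min_le_right _ _
    rw [le_div_iff₀ (by positivity)] at h1
    nlinarith [mul_pos hΛ hr₀]
  refine ⟨1 + 128 * M / ν, r₀, by positivity, hr₀, by linarith, fun γ hγγ => ?_⟩
  have hMν : 0 < 128 * M / ν := by positivity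
  have hγ : 1 ≤ γ := by linarith
  have hγ0 : 0 < γ := by linarith
  have hγM : 128 * M ≤ ν * γ := by
    have : 128 * M / ν ≤ γ := by linarith
    rw [div_le_iff₀ hν] at this; linarith
  obtain ⟨S, hS⟩ : ∃ S, S = 3 / l + 2 * M / r + 8 * A / e ^ 2 + 400 * D / e + 128 * C3 / ν :=
    ⟨_, rfl⟩
  have p1 : 0 < 3 / l := by positivity
  have p2 : 0 < 2 * M / r := by positivity
  have p3 : 0 < 8 * A / e ^ 2 := by positivity
  have p4 : 0 < 400 * D / e := by positivity
  have p5 : 0 < 128 * C3 / ν := by positivity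
  have hS0 : 0 < S := by rw [hS]; positivity
  obtain ⟨c₂, hc₂⟩ : ∃ c₂, c₂ = ν * γ * (e / (400 * D * γ)) / (128 * ((d + 1) * e * Real.exp 1)) :=
    ⟨_, rfl⟩
  have hα : (0 : ℝ) < 1 / (2 * ((d : ℝ) + 1)) := by positivity
  refine ⟨min εbar ((S⁻¹ / γ) ^ (1 / (2 * ((d : ℝ) + 1)))⁻¹), c₂, e / (400 * D * γ) / 2,
    lt_min hεbar (by positivity), min_le_left _ _, by rw [hc₂]; positivity, by positivity, ?_⟩
  intro ε hε hεε n hn hnε Istar hI hres x₀ hx₀ k hk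
  have hεmem : ε ∈ Set.Icc (0 : ℝ) εbar := ⟨hε.le, hεε.trans (min_le_left _ _)⟩
  rw [Real.rpow_neg hε.le] at hk
  have htb : ε ^ (1 / (2 * ((d : ℝ) + 1))) ≤ S⁻¹ / γ := by
    have h1 := Real.rpow_le_rpow hε.le (hεε.trans (min_le_right _ _)) hα.le
    rwa [Real.rpow_inv_rpow (by positivity) hα.ne'] at h1
  obtain ⟨t, ht⟩ : ∃ t, t = ε ^ (1 / (2 * ((d : ℝ) + 1))) := ⟨_, rfl⟩
  have ht0 : 0 < t := by rw [ht]; positivity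
  rw [← ht] at htb hk hx₀ ⊢
  obtain ⟨ρ, hρdef⟩ : ∃ ρ, ρ = γ * t / n := ⟨_, rfl⟩
  rw [← hρdef] at hx₀ ⊢
  have hερ' : γ ^ 2 * ε ≤ ρ ^ 2 := nek_eps hε hn hγ hnε ht hρdef
  have hn' : (0 : ℝ) < n := by exact_mod_cast hn
  have hn1 : (1 : ℝ) ≤ n := by exact_mod_cast hn
  have hρ : 0 < ρ := by rw [hρdef]; positivity
  have hnρ : n * ρ = γ * t := by rw [hρdef]; field_simp
  have hρβ : ρ ≤ γ * t := hnρ ▸ le_mul_of_one_le_left hρ.le hn1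
  have hβS : γ * t * S ≤ 1 := by
    rw [le_div_iff₀ hγ0, le_inv_comm₀ (by positivity) hS0] at htb
    rw [mul_comm t γ] at htb
    have := mul_le_mul_of_nonneg_left htb (show 0 ≤ γ * t by positivity)
    rwa [mul_inv_cancel₀ (by positivity)] at this
  have hβ0 : 0 < γ * t := by positivity
  have key : ∀ X : ℝ, X ≤ S → γ * t * X ≤ 1 := fun X hX =>
    (mul_le_mul_of_nonneg_left hX hβ0.le).trans hβS
  have k1 := key (3 / l) (by rw [hS]; linarith)
  have k2 := key (2 * M / r) (by rw [hS]; linarith)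
  have k3 := key (8 * A / e ^ 2) (by rw [hS]; linarith)
  have k4 := key (400 * D / e) (by rw [hS]; linarith)
  have k5 := key (128 * C3 / ν) (by rw [hS]; linarith)
  rw [← mul_div_assoc, div_le_one (by positivity)] at k1 k3 k4
  have h3l : 3 * ρ ≤ l := by linarith
  have h3 : 3 * ρ ≤ σ := by linarith
  have hερ2 : ε ≤ ρ ^ 2 := (le_mul_of_one_le_left hε.le (one_le_pow₀ hγ)).trans hερ'
  have hερ : ε * (2 * M / r) ≤ ρ := by
    calc ε * (2 * M / r) ≤ ρ ^ 2 * (2 * M / r) := mul_le_mul_of_nonneg_right hερ2 p2.le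
      _ = ρ * (ρ * (2 * M / r)) := by ring
      _ ≤ ρ * (γ * t * (2 * M / r)) := by gcongr
      _ ≤ ρ * 1 := by gcongr
      _ = ρ := mul_one _
  have hμ : 8 * ((9 * Λ + M) * ρ) ≤ e ^ 2 := by
    rw [← hA]
    have := mul_le_mul_of_nonneg_left hρβ hA0.le
    linarith
  have hC' : D * ρ = (2 / e * (1 + d * 3) + 1) * ((9 * Λ + M) * ρ) := by
    rw [hDdef, hA]; ring
  have hδ : n * (D * ρ) = D * (γ * t) := by rw [← hnρ]; ring
  have hne : n * (D * ρ) ≤ e := by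
    rw [hδ]; linarith [mul_pos hD hβ0]
  obtain ⟨Hc, hHa, hHr, hHg, hHq⟩ := hpack Istar hI
  obtain ⟨G, hGd, hG, hGr⟩ := nek_block (n := n) (F := F ε) (s := s ε) hρ hDF hI h3 h3l hε.le hερ2
    hερ he he1 her hHa hHg hΛ hHq (hsa ε hεmem) hM.le
    (fun z hz => (hsbound ε hεmem z hz).trans hMs) (hsreal ε hεmem)
    (fun x hx => hF ε hεmem x ⟨Istar, hI, by rw [dist_eq_norm]; linarith⟩) hμ hC' hne
  have hm1 : 1 ≤ ⌊e / (400 * (D * (γ * t)))⌋₊ := by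
    rw [Nat.one_le_floor_iff, one_le_div (by positivity)]; linarith
  have hm : 400 * ((⌊e / (400 * (D * (γ * t)))⌋₊ : ℝ) * (n * (D * ρ))) ≤ e := by
    have h1 := Nat.floor_le (show 0 ≤ e / (400 * (D * (γ * t))) by positivity)
    rw [le_div_iff₀ (by positivity)] at h1
    rw [hδ]; linarith
  have hbud := nek_budget (M := M) (n := n) hn he hD hγ ht0 hν hM hρdef hγM hC3 k5 hr₀Λ hερ'
    (nek_expo (d := d) he hD hγ0 ht0 hc₂ hν)
  exact nek_iter hn hρ he he1 her (by positivity) hν hΛ hGd hG hGr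
    (nek_hlow hd hν hρ (hUc Istar hI) (by linarith) (by linarith) hω hconvex hHr)
    (fun u hu => by
      have := nekHs_bound hρ hHq (J := cx d u) (by
        rw [cx_norm]
        have := mul_le_mul_of_nonneg_left hu hρ.le
        linarith)
      rwa [cx_norm] at this)
    (hlift ε hεmem) hres hm1 hm hr₀.le hr₀2 hbud hx₀.le k hk
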